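/- arXiv:1511.01699 — 10 statements merged into one kernel-verified Lean document; each statement's English description precedes it below -/
import Mathlib

section
/- For every k ≥ 1 and every real ε > 0, there exist dimensions d, n, a d×n matrix A over GF(2), and matrices U (d×k) and V (k×n) over GF(2) with ‖A − U·V‖² > 0, such that for every column-selection function s : Fin k → Fin n and every k×n matrix Q over GF(2), ‖A − P_A·Q‖² > (k/2 + 1 + k/(2·(2^k − 1)) − ε) · ‖A − U·V‖², where P_A is the column submatrix of A given by s. In particular, the approximation ratio k/2 + 1 + k/(2·(2^k − 1)) of column subset selection over GF(2) is asymptotically tight. -/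
/-!
Columns are indexed by pairs `(v, t)` with `v` a nonzero vector of `GF(2)^k` and `t < N`. The column
`(v, t)` of the hard instance consists of `k + 2` stacked copies of `v`, followed by the unit vector
`e_{(v, t)}`. Deleting the unit vectors leaves a matrix of rank at most `k`, so the optimal error is
at most the number `N (2^k - 1)` of columns.

Let `s` select `k` columns and let `φ : GF(2)^k → GF(2)^k` send coefficients `q` to the induced
combination of the selected vectors `v`. A column `(v, t)` approximated with coefficients `q` such
that `φ q ≠ v` has error at least `k + 2` because of the stacked copies.
* If `φ` is not surjective, its range misses at least half of the vectors, and each of these costs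
  `k + 2`.
* If `φ` is bijective, an unselected column with `φ q = v` keeps its own unit vector and acquires one
  more for every nonzero coefficient, so it costs `1 + |φ⁻¹ v|`.

In both cases (`exists_weight`) the costs `g v`, summed over all `v`, total at least
`(k + 2) 2^k / 2`, with `g 0 ≤ 1`. Hence the total error is at least
`N ((k + 2) 2^k / 2 - 1) - k (k + 2)`, the last term accounting for the selected columns, while
`(k + 2) 2^k / 2 - 1 = (k/2 + 1 + k/(2(2^k - 1))) (2^k - 1)`. It remains to take
`N > k (k + 2) / ε`.
-/

open Matrix Finset

/-- Squared Frobenius norm of a GF(2) matrix: the number of nonzero entries. -/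
def sqNorm {d n : ℕ} (M : Matrix (Fin d) (Fin n) (ZMod 2)) : ℕ :=
  (Finset.univ.filter fun p : Fin d × Fin n => M p.1 p.2 ≠ 0).card

/-- Column indices: a nonzero vector of `GF(2)^k` together with a copy number. -/
abbrev ColIdx (k N : ℕ) : Type := {v : Fin k → ZMod 2 // v ≠ 0} × Fin N

/-- Row indices: `k + 2` copies of each coordinate, and one extra row per column. -/
abbrev RowIdx (k N : ℕ) : Type := (Fin k × Fin (k + 2)) ⊕ ColIdx k N

/-- The hard instance: column `(v, t)` is `k + 2` stacked copies of `v` above `e_{(v, t)}`. -/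
def hardA (k N : ℕ) : Matrix (RowIdx k N) (ColIdx k N) (ZMod 2) :=
  fun r c => Sum.elim (fun p => c.1.1 p.1) (fun c' => if c' = c then 1 else 0) r

/-- Left factor of the planted rank-`k` approximation. -/
def hardU (k N : ℕ) : Matrix (RowIdx k N) (Fin k) (ZMod 2) :=
  fun r i => Sum.elim (fun p => if p.1 = i then 1 else 0) (fun _ => 0) r

/-- Right factor of the planted rank-`k` approximation. -/
def hardV (k N : ℕ) : Matrix (Fin k) (ColIdx k N) (ZMod 2) :=
  fun i c => c.1.1 i

/-- Number of nonzero entries of the column `c` of `M`. -/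
def colErr {ρ κ : Type*} [Fintype ρ] (M : Matrix ρ κ (ZMod 2)) (c : κ) : ℕ :=
  (Finset.univ.filter fun r => M r c ≠ 0).card

lemma sqNorm_submatrix {ρ κ : Type*} [Fintype ρ] [Fintype κ] {d n : ℕ}
    (e : Fin d ≃ ρ) (f : Fin n ≃ κ) (M : Matrix ρ κ (ZMod 2)) :
    sqNorm (M.submatrix e f) = ∑ c, colErr M c := by
  classical
  have h : ∀ c, colErr M c = ∑ r, if M r c ≠ 0 then 1 else 0 := fun c => by
    simp [colErr, Finset.card_filter]
  simp only [h]
  rw [sqNorm, Finset.card_filter, Fintype.sum_prod_type_right,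
    ← Equiv.sum_comp f (fun c => ∑ r, if M r c ≠ 0 then 1 else 0)]
  refine Finset.sum_congr rfl fun c _ => ?_
  rw [← Equiv.sum_comp e (fun r => if M r (f c) ≠ 0 then 1 else 0)]
  rfl

/-- The planted approximation leaves exactly one wrong entry in each column. -/
lemma colErr_planted (k N : ℕ) (c : ColIdx k N) :
    colErr (hardA k N - hardU k N * hardV k N) c = 1 := by
  rw [colErr, Finset.card_eq_one]
  refine ⟨Sum.inr c, ?_⟩
  ext r
  rw [Finset.mem_filter, Finset.mem_singleton]
  rcases r with p | c'
  · simp [hardA, hardU, hardV, Matrix.mul_apply]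
  · simp [hardA, hardU, hardV, Matrix.mul_apply]

/-- Complementing all coordinates pairs weight `w` with weight `k - w`. -/
lemma two_mul_sum_hammingNorm (k : ℕ) :
    2 * ∑ q : Fin k → ZMod 2, hammingNorm q = k * 2 ^ k := by
  have h1 : ∑ q : Fin k → ZMod 2, hammingNorm (1 + q) = ∑ q : Fin k → ZMod 2, hammingNorm q :=
    Equiv.sum_comp (Equiv.addLeft (1 : Fin k → ZMod 2)) (fun q => hammingNorm q)
  have h2 : ∀ q : Fin k → ZMod 2, hammingNorm q + hammingNorm (1 + q) = k := fun q => by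
    have h3 : ∀ x : ZMod 2, (1 + x ≠ 0) ↔ ¬ (x ≠ 0) := by decide
    simp only [hammingNorm, Pi.add_apply, Pi.one_apply, h3]
    rw [Finset.card_filter_add_card_filter_not]
    simp
  rw [two_mul]
  nth_rewrite 2 [← h1]
  rw [← Finset.sum_add_distrib]
  simp [h2, ZMod.card, mul_comm]

/-- The combination of the vectors of the selected columns with given coefficients. -/
def comb {k N : ℕ} (s : Fin k → ColIdx k N) : (Fin k → ZMod 2) →ₗ[ZMod 2] (Fin k → ZMod 2) :=
  Fintype.linearCombination (ZMod 2) (fun j => (s j).1.1)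

/-- Wrong coefficients are penalized by the stacked copies. -/
lemma le_colErr_of_comb_ne {k N : ℕ} (s : Fin k → ColIdx k N)
    (Q : Matrix (Fin k) (ColIdx k N) (ZMod 2)) (c : ColIdx k N)
    (h : comb s (fun j => Q j c) ≠ c.1.1) :
    k + 2 ≤ colErr (hardA k N - (hardA k N).submatrix id s * Q) c := by
  classical
  obtain ⟨i, hi⟩ := Function.ne_iff.1 h
  have hsub : (Finset.univ.image fun r : Fin (k + 2) => (Sum.inl (i, r) : RowIdx k N)) ⊆
      Finset.univ.filter fun r =>
        (hardA k N - (hardA k N).submatrix id s * Q) r c ≠ 0 := by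
    intro r hr
    obtain ⟨r, -, rfl⟩ := Finset.mem_image.1 hr
    rw [Finset.mem_filter]
    refine ⟨Finset.mem_univ _, fun h0 => hi ?_⟩
    rw [Matrix.sub_apply, sub_eq_zero] at h0
    simp only [hardA, Matrix.mul_apply, Matrix.submatrix_apply, id, Sum.elim_inl] at h0
    rw [h0]
    simp [comb, Fintype.linearCombination_apply, mul_comm]
  have := Finset.card_le_card hsub
  rw [Finset.card_image_of_injective _ (fun a b hab => by simpa using hab)] at this
  simpa [colErr] using this

/-- Every nonzero coefficient brings in the unit vector of a selected column. -/
lemma hammingNorm_lt_colErr {k N : ℕ} (s : Fin k → ColIdx k N) (hs : Function.Injective s)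
    (Q : Matrix (Fin k) (ColIdx k N) (ZMod 2)) (c : ColIdx k N) (hc : c ∉ Set.range s) :
    1 + hammingNorm (fun j => Q j c) ≤
      colErr (hardA k N - (hardA k N).submatrix id s * Q) c := by
  classical
  have hc' : ∀ j, c ≠ s j := fun j hj => hc ⟨j, hj.symm⟩
  have hsub : insert (Sum.inr c : RowIdx k N)
      ((Finset.univ.filter fun j => Q j c ≠ 0).image fun j => (Sum.inr (s j) : RowIdx k N)) ⊆
      Finset.univ.filter fun r =>
        (hardA k N - (hardA k N).submatrix id s * Q) r c ≠ 0 := by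
    intro r hr
    rw [Finset.mem_filter]
    refine ⟨Finset.mem_univ _, ?_⟩
    rcases Finset.mem_insert.1 hr with rfl | hr
    · simp [hardA, Matrix.mul_apply, hc']
    · obtain ⟨j, hj, rfl⟩ := Finset.mem_image.1 hr
      have hj' := (Finset.mem_filter.1 hj).2
      simpa [hardA, Matrix.mul_apply, (hc' j).symm, hs.eq_iff] using hj'
  have := Finset.card_le_card hsub
  rw [Finset.card_insert_of_notMem (by simp [fun j => (hc' j).symm]),
    Finset.card_image_of_injective _ (fun a b hab => hs (Sum.inr_injective hab))] at this
  rw [add_comm]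
  exact this

/-- A lower bound on the error of the unselected columns that depends only on their vectors. -/
lemma exists_weight {k N : ℕ} (s : Fin k → ColIdx k N)
    (Q : Matrix (Fin k) (ColIdx k N) (ZMod 2)) :
    ∃ g : (Fin k → ZMod 2) → ℕ, (k + 2) * 2 ^ k ≤ 2 * ∑ v, g v ∧ g 0 ≤ 1 ∧
      (∀ v, g v ≤ k + 2) ∧ ∀ c, c ∉ Set.range s →
        g c.1.1 ≤ colErr (hardA k N - (hardA k N).submatrix id s * Q) c := by
  classical
  by_cases hsurj : Function.Surjective (comb s)
  · have hinj : Function.Injective (comb s) := LinearMap.injective_iff_surjective.2 hsurj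
    have hs : Function.Injective s := by
      intro i j hij
      have : (Pi.single i 1 : Fin k → ZMod 2) = Pi.single j 1 := by
        apply hinj
        simp [comb, Fintype.linearCombination_apply_single, hij]
      by_contra hne
      have h := congrFun this i
      simp [hne] at h
    let φ := Equiv.ofBijective (comb s) ⟨hinj, hsurj⟩
    have hle : ∀ q : Fin k → ZMod 2, hammingNorm q ≤ k := fun q => by
      simpa using hammingNorm_le_card_fintype (x := q)
    refine ⟨fun v => 1 + hammingNorm (φ.symm v), ?_, ?_, ?_, ?_⟩
    · rw [Equiv.sum_comp φ.symm (fun q => 1 + hammingNorm q), Finset.sum_add_distrib, mul_add,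
        two_mul_sum_hammingNorm]
      simp [ZMod.card]
      ring_nf
      rfl
    · have : φ.symm 0 = 0 := by
        rw [Equiv.symm_apply_eq]
        exact (map_zero (comb s)).symm
      simp [this]
    · intro v
      have := hle (φ.symm v)
      lia
    · intro c hc
      by_cases h : comb s (fun j => Q j c) = c.1.1
      · have h' : φ.symm c.1.1 = fun j => Q j c := by
          rw [Equiv.symm_apply_eq]
          exact h.symm
        simp only [h']
        exact hammingNorm_lt_colErr s hs Q c hc
      · have := le_colErr_of_comb_ne s Q c h
        have := hle (φ.symm c.1.1)
        lia
  · refine ⟨fun v => if v ∈ LinearMap.range (comb s) then 0 else k + 2, ?_, ?_, ?_, ?_⟩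
    · obtain ⟨w, hw⟩ := not_forall.1 hsurj
      have hw' : w ∉ LinearMap.range (comb s) := fun h => hw h
      -- translating the range by the missed vector `w` shows that it covers at most half the space
      have hcard : (Finset.univ.filter fun v => v ∈ LinearMap.range (comb s)).card ≤
          (Finset.univ.filter fun v => ¬ v ∈ LinearMap.range (comb s)).card := by
        refine Finset.card_le_card_of_injOn (fun v => v + w) ?_ ?_
        · intro v hv
          have hv' : v ∈ LinearMap.range (comb s) := by simpa using hv
          have : v + w ∉ LinearMap.range (comb s) := fun h =>
            hw' ((Submodule.add_mem_iff_right _ hv').1 h)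
          simpa using this
        · exact fun a _ b _ hab => add_right_cancel hab
      have htot := Finset.card_filter_add_card_filter_not (s := Finset.univ)
        (fun v : Fin k → ZMod 2 => v ∈ LinearMap.range (comb s))
      have hV : (Finset.univ : Finset (Fin k → ZMod 2)).card = 2 ^ k := by simp [ZMod.card]
      rw [hV] at htot
      rw [Finset.sum_ite, Finset.sum_const_zero, zero_add, Finset.sum_const, smul_eq_mul]
      nlinarith
    · simp
    · intro v
      dsimp only
      split_ifs <;> lia
    · intro c _
      dsimp only
      split_ifs with h
      · exact Nat.zero_le _
      · exact le_colErr_of_comb_ne s Q c fun h' => h ⟨_, h'⟩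

lemma sum_colErr_lower {k N : ℕ} (s : Fin k → ColIdx k N)
    (Q : Matrix (Fin k) (ColIdx k N) (ZMod 2)) :
    N * ((k + 2) * 2 ^ k) ≤
      2 * (∑ c, colErr (hardA k N - (hardA k N).submatrix id s * Q) c) + 2 * N
        + 2 * (k * (k + 2)) := by
  classical
  obtain ⟨g, hsum, h0, hle, herr⟩ := exists_weight s Q
  set E := fun c => colErr (hardA k N - (hardA k N).submatrix id s * Q) c with hE
  have h1 : ∑ c : ColIdx k N, g c.1.1 ≤
      ∑ c, (E c + if c ∈ Finset.univ.image s then k + 2 else 0) := by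
    refine Finset.sum_le_sum fun c _ => ?_
    by_cases hc : c ∈ Set.range s
    · have hc' : c ∈ Finset.univ.image s := by simpa using hc
      rw [if_pos hc']
      exact (hle _).trans (Nat.le_add_left _ _)
    · exact (herr c hc).trans (Nat.le_add_right _ _)
  have h2 : ∑ c : ColIdx k N, (if c ∈ Finset.univ.image s then k + 2 else 0) ≤ k * (k + 2) := by
    rw [Finset.sum_ite_mem, Finset.univ_inter, Finset.sum_const, smul_eq_mul]
    have : (Finset.univ.image s).card ≤ k := Finset.card_image_le.trans (by simp)
    exact Nat.mul_le_mul_right _ this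
  have h3 : ∑ c : ColIdx k N, g c.1.1 = N * ∑ v : {v : Fin k → ZMod 2 // v ≠ 0}, g v.1 := by
    rw [Fintype.sum_prod_type, Finset.mul_sum]
    simp
  have h4 : ∑ v, g v = g 0 + ∑ v : {v : Fin k → ZMod 2 // v ≠ 0}, g v.1 := by
    rw [← Finset.add_sum_erase _ _ (Finset.mem_univ (0 : Fin k → ZMod 2))]
    congr 1
    exact Finset.sum_subtype _ (by simp) _
  rw [Finset.sum_add_distrib] at h1
  have h5 : (k + 2) * 2 ^ k ≤ 2 * (∑ v : {v : Fin k → ZMod 2 // v ≠ 0}, g v.1) + 2 := by lia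
  have h6 := Nat.mul_le_mul_left N h5
  rw [h3] at h1
  nlinarith

/-- Lower bound: the approximation ratio `k/2 + 1 + k/(2(2^k - 1))` of column
subset selection over GF(2) is asymptotically tight. -/
theorem css_gf2_lower_bound (k : ℕ) (hk : 1 ≤ k) (ε : ℝ) (hε : 0 < ε) :
    ∃ (d n : ℕ) (A : Matrix (Fin d) (Fin n) (ZMod 2))
      (U : Matrix (Fin d) (Fin k) (ZMod 2)) (V : Matrix (Fin k) (Fin n) (ZMod 2)),
      0 < sqNorm (A - U * V) ∧
      ∀ (s : Fin k → Fin n) (Q : Matrix (Fin k) (Fin n) (ZMod 2)),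
        ((k : ℝ) / 2 + 1 + (k : ℝ) / (2 * (2 ^ k - 1)) - ε) * (sqNorm (A - U * V) : ℝ)
          < (sqNorm (A - A.submatrix id s * Q) : ℝ) := by
  classical
  obtain ⟨N, hN⟩ := exists_nat_gt ((k * (k + 2) : ℝ) / ε)
  rw [div_lt_iff₀ hε] at hN
  have hNpos : (0 : ℝ) < N := by
    by_contra h
    have h1 : (N : ℝ) * ε ≤ 0 := mul_nonpos_of_nonpos_of_nonneg (not_lt.1 h) hε.le
    have h2 : (0 : ℝ) ≤ k * (k + 2) := by positivity
    linarith
  have hpow : (2 : ℝ) ≤ 2 ^ k := by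
    simpa using pow_le_pow_right₀ (one_le_two : (1 : ℝ) ≤ 2) hk
  let e := (Fintype.equivFin (RowIdx k N)).symm
  let f := (Fintype.equivFin (ColIdx k N)).symm
  have hopt : sqNorm ((hardA k N).submatrix e f -
      (hardU k N).submatrix e id * (hardV k N).submatrix id f) = (2 ^ k - 1) * N := by
    have : (hardA k N).submatrix e f - (hardU k N).submatrix e id * (hardV k N).submatrix id f =
        (hardA k N - hardU k N * hardV k N).submatrix e f := rfl
    rw [this, sqNorm_submatrix]
    simp [colErr_planted, Fintype.card_subtype_compl, ZMod.card]
  have hoptR : (((2 ^ k - 1) * N : ℕ) : ℝ) = (2 ^ k - 1) * N := by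
    rw [Nat.cast_mul, Nat.cast_sub Nat.one_le_two_pow]
    push_cast
    ring
  refine ⟨_, _, (hardA k N).submatrix e f, (hardU k N).submatrix e id,
    (hardV k N).submatrix id f, ?_, fun s Q => ?_⟩
  · rw [hopt]
    have : (0 : ℝ) < (((2 ^ k - 1) * N : ℕ) : ℝ) := by
      rw [hoptR]
      exact mul_pos (by linarith) hNpos
    exact_mod_cast this
  · have hrew : (hardA k N).submatrix e f - ((hardA k N).submatrix e f).submatrix id s * Q =
        (hardA k N - (hardA k N).submatrix id (fun j => f (s j)) *
          Q.submatrix id f.symm).submatrix e f := by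
      ext r c
      simp [Matrix.mul_apply]
    rw [hopt, hoptR, hrew, sqNorm_submatrix]
    have hlow := sum_colErr_lower (fun j => f (s j)) (Q.submatrix id f.symm)
    set T := ∑ c, colErr (hardA k N - (hardA k N).submatrix id (fun j => f (s j)) *
          Q.submatrix id f.symm) c
    have hlowR : (N : ℝ) * ((k + 2) * 2 ^ k) ≤ 2 * T + 2 * N + 2 * (k * (k + 2)) := by
      exact_mod_cast hlow
    have hne : (2 : ℝ) ^ k - 1 ≠ 0 := by linarith
    have hratio : ((k : ℝ) / 2 + 1 + (k : ℝ) / (2 * (2 ^ k - 1)) - ε) * ((2 ^ k - 1) * N) =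
        N * ((k + 2) * 2 ^ k) / 2 - N - N * ε * (2 ^ k - 1) := by
      field_simp
      ring
    have hε' : (N : ℝ) * ε * 1 ≤ N * ε * (2 ^ k - 1) :=
      mul_le_mul_of_nonneg_left (by linarith) (by positivity)
    rw [hratio]
    linarith
end

section
/- With the setup below, for every family b_1, …, b_k of linearly independent vectors in GF(2)^k and every r with 0 ≤ r ≤ k, the following real-valued inequality holds: Err^(r)(b_1,…,b_{k−r}) ≤ OPT_k + λ_r · Σ_{c ∈ span^c(b_1,…,b_{k−r})} L_c + Σ_{i=1}^{k−r} f_i(b_1,…,b_{k−r}) · M_{b_i}, where λ_0 = 0 and λ_r = (r/2)·(1 + 1/(2^r − 1)) for 1 ≤ r ≤ k, and f_i(b_1,…,b_{k−r}) = N_{b_i + span^{\i}(b_1,…,b_{k−r})} + (1/2)·N_{span^c(b_1,…,b_{k−r})}. -/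
/-!
The proof is by induction on `r`, from the case of `k` fixed vectors down to `k - r` of them.

For `r = 0` every column `a_j`, with `V`-column `c = ∑ x_i b_i`, is approximated by
`∑ x_i a_{nn(U b_i)}`. By the triangle inequality the error is at most that of `U c` plus the
distances of `U b_i` to its nearest column over the `i` with `x_i = 1`, and such a distance is at
most the average `M_{b_i}` (`Err_le_bnd`).

For the step, let `S` be the span of the `m` fixed vectors. It suffices to find `c ∉ S` for which
the bound for `b_1, …, b_m, c` is at most the bound for `b_1, …, b_m` (`exists_bnd_update_le`). The
coset `q` of `S` is chosen first, then `c ∈ q`.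

Inside a fixed coset `q`, average over `c` with weights `n_c` (`exists_le_of_average`). The average
of `M_c` is then `L_q / N_q`. The extra mass `N_{b_i + c + span^{\i}}` acquired by the coefficient of
`M_{b_i}` has average at most `2 p₀ p₁ / (p₀ + p₁) ≤ N_q / 2`, where `p₀`, `p₁` are the masses of the
two halves of `q` cut out by the `i`-th coordinate (`sum_flipSum_le`); this exactly balances the
loss of `N_q / 2` in `N_{span^c} / 2`. What remains is to choose `q ≠ 0` with
`λ_r (L - L_q) + (N_q + N) / 2 * L_q / N_q ≤ λ_{r+1} L`, where `N`, `L` are the totals over the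
`2^{r+1} - 1` nonzero cosets; this follows from Jensen's inequality (`exists_good_class`).
-/

open Matrix Finset
open scoped Classical

noncomputable section

/-- The `j`-th column of `A` as a vector in GF(2)^d. -/
def colA {d n : ℕ} (A : Matrix (Fin d) (Fin n) (ZMod 2)) (j : Fin n) : Fin d → ZMod 2 :=
  fun i => A i j

/-- The number of entries where the two matrices differ. -/
def diffCount {d n : ℕ} (A B : Matrix (Fin d) (Fin n) (ZMod 2)) : ℕ :=
  (Finset.univ.filter fun p : Fin d × Fin n => A p.1 p.2 ≠ B p.1 p.2).card

/-- `Err(b_1,…,b_k)`: the approximation error when the basis matrix consists of the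
nearest-neighbor columns `a_{nn(U b_i)}`, each column of `A` being approximated by its
best GF(2)-linear combination of these. -/
def Err {d n k : ℕ} (A : Matrix (Fin d) (Fin n) (ZMod 2))
    (U : Matrix (Fin d) (Fin k) (ZMod 2)) (nn : (Fin d → ZMod 2) → Fin n)
    (b : Fin k → (Fin k → ZMod 2)) : ℕ :=
  ∑ j : Fin n, ⨅ x : Fin k → ZMod 2,
    hammingDist (colA A j) (∑ i : Fin k, x i • colA A (nn (U.mulVec (b i))))

/-- `Err^(r)(b_1,…,b_{k-r})`: the minimum of `Err` over all choices of the last `r`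
vectors, the first `k - r` vectors being fixed. -/
def ErrR {d n k : ℕ} (A : Matrix (Fin d) (Fin n) (ZMod 2))
    (U : Matrix (Fin d) (Fin k) (ZMod 2)) (nn : (Fin d → ZMod 2) → Fin n)
    (r : ℕ) (b : Fin k → (Fin k → ZMod 2)) : ℕ :=
  ⨅ c : {c : Fin k → (Fin k → ZMod 2) // ∀ i : Fin k, (i : ℕ) < k - r → c i = b i},
    Err A U nn c.1

/-- `J_c`: the set of column indices of `V` whose column equals `c`. -/
def Jc {n k : ℕ} (V : Matrix (Fin k) (Fin n) (ZMod 2)) (c : Fin k → ZMod 2) :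
    Finset (Fin n) :=
  Finset.univ.filter fun j => (fun i => V i j) = c

/-- `n_c`: the number of columns of `V` equal to `c`. -/
def nC {n k : ℕ} (V : Matrix (Fin k) (Fin n) (ZMod 2)) (c : Fin k → ZMod 2) : ℕ :=
  (Jc V c).card

/-- `L_c`: the total approximation error of the columns in `J_c`. -/
def Lc {d n k : ℕ} (A : Matrix (Fin d) (Fin n) (ZMod 2))
    (U : Matrix (Fin d) (Fin k) (ZMod 2)) (V : Matrix (Fin k) (Fin n) (ZMod 2))
    (c : Fin k → ZMod 2) : ℕ :=
  ∑ j ∈ Jc V c, hammingDist (colA A j) (U.mulVec c)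

/-- `M_c = L_c / n_c` if `n_c > 0`, and `M_c = d` otherwise. -/
def Mc {d n k : ℕ} (A : Matrix (Fin d) (Fin n) (ZMod 2))
    (U : Matrix (Fin d) (Fin k) (ZMod 2)) (V : Matrix (Fin k) (Fin n) (ZMod 2))
    (c : Fin k → ZMod 2) : ℝ :=
  if 0 < nC V c then (Lc A U V c : ℝ) / (nC V c : ℝ) else (d : ℝ)

/-- `N_X`: the total number of columns of `V` belonging to the set `X`. -/
def NX {n k : ℕ} (V : Matrix (Fin k) (Fin n) (ZMod 2)) (X : Set (Fin k → ZMod 2)) : ℕ :=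
  ∑ c : Fin k → ZMod 2, if c ∈ X then nC V c else 0

/-- `λ_r`: `0` for `r = 0`, and `(r/2)(1 + 1/(2^r - 1))` for `r ≥ 1`. -/
def lam (r : ℕ) : ℝ :=
  if r = 0 then 0 else ((r : ℝ) / 2) * (1 + 1 / (2 ^ r - 1))

/-! ### The coefficients `λ_r` and the choice of a coset -/

/-- The recursion for `λ_r` that the choice of a coset produces. -/
lemma lam_succ (r : ℕ) (hr : 1 ≤ r) :
    lam (r + 1) = lam r + 1 / 2 - (lam r - 1 / 2) / (2 ^ (r + 1) - 1) := by
  have h2 : (2 : ℝ) ≤ 2 ^ r := by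
    simpa using pow_le_pow_right₀ (show (1 : ℝ) ≤ 2 by norm_num) hr
  have h3 : (2 : ℝ) ^ r - 1 ≠ 0 := by linarith
  have h4 : (2 : ℝ) ^ r * 2 - 1 ≠ 0 := by linarith
  have h0 : r ≠ 0 := by omega
  simp only [lam, h0, if_false, Nat.succ_ne_zero, pow_succ]
  push_cast
  generalize (2 : ℝ) ^ r = x at *
  have h5 : 2 * x - 1 ≠ 0 := by rwa [mul_comm]
  field_simp
  ring

lemma lam_lower (r : ℕ) (hr : 1 ≤ r) : 1 / 2 ≤ lam r := by
  have h2 : (2 : ℝ) ≤ 2 ^ r := by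
    simpa using pow_le_pow_right₀ (show (1 : ℝ) ≤ 2 by norm_num) hr
  have h3 : 0 ≤ 1 / ((2 : ℝ) ^ r - 1) := by apply div_nonneg <;> linarith
  have h0 : r ≠ 0 := by omega
  have h1 : (1 : ℝ) ≤ r := by exact_mod_cast hr
  simp only [lam, h0, if_false]
  nlinarith

lemma lam_upper (r : ℕ) (hr : 1 ≤ r) : lam r ≤ r := by
  have h2 : (2 : ℝ) ≤ 2 ^ r := by
    simpa using pow_le_pow_right₀ (show (1 : ℝ) ≤ 2 by norm_num) hr
  have h3 : 1 / ((2 : ℝ) ^ r - 1) ≤ 1 := by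
    rw [div_le_one (by linarith)]; linarith
  have h0 : r ≠ 0 := by omega
  have h1 : (1 : ℝ) ≤ r := by exact_mod_cast hr
  simp only [lam, h0, if_false]
  nlinarith

/-- The choice of a coset. Here `s` is the set of nonzero cosets, `N` and `L` are the masses of
`n_c` and `L_c` on them. If every coset with `N q > 0` failed, then after normalising,
`L q > g (N q)` for the convex function `g y = (1 - σ) y / (1 - σ T y)` with `T = s.card`, and
Jensen's inequality (used through the tangent line of `g` at `1 / T`) would make the total of `L`
exceed itself. Cosets with `N q = 0` must be avoided, since `M_c = d` there, but they satisfy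
`L q = 0 = g 0` and so do not disturb the argument. For `r = 0` there is a single coset. -/
lemma exists_good_class {Q : Type*} (s : Finset Q) (r : ℕ) (hs : s.card = 2 ^ (r + 1) - 1)
    (N L : Q → ℝ) (hN : ∀ q, 0 ≤ N q) (hL : ∀ q, 0 ≤ L q) (hNL : ∀ q, N q = 0 → L q = 0)
    (hpos : 0 < ∑ q ∈ s, N q) :
    ∃ q ∈ s, 0 < N q ∧
      lam r * N q * (∑ p ∈ s, L p - L q) + (N q + ∑ p ∈ s, N p) / 2 * L q ≤
        lam (r + 1) * N q * ∑ p ∈ s, L p := by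
  rcases Nat.eq_zero_or_pos r with h0 | hr
  · subst h0
    obtain ⟨q, rfl⟩ := Finset.card_eq_one.mp (by simpa using hs)
    simp only [Finset.sum_singleton] at hpos ⊢
    refine ⟨q, by simp, hpos, ?_⟩
    have : lam 1 = 1 := by norm_num [lam]
    simp only [zero_add, this]
    apply le_of_eq
    ring
  set T : ℝ := 2 ^ (r + 1) - 1 with hT
  have hcard : (s.card : ℝ) = T := by
    rw [hs, Nat.cast_sub Nat.one_le_two_pow]; simp [hT]
  have h2 : (r : ℝ) + 1 ≤ 2 ^ r := by
    exact_mod_cast (Nat.lt_two_pow_self (n := r))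
  have h1 : (1 : ℝ) ≤ r := by exact_mod_cast hr
  have hTpos : 2 * (lam r - 1 / 2) < T := by
    have := lam_upper r hr
    rw [hT, pow_succ]; linarith
  have hμ := lam_lower r hr
  have hT0 : 0 < T := by linarith
  rw [lam_succ r hr, ← hT]
  set M := ∑ p ∈ s, N p
  set Λ := ∑ p ∈ s, L p with hΛ
  have hΛ0 : 0 ≤ Λ := Finset.sum_nonneg fun q _ => hL q
  by_contra! hcon
  set σ : ℝ := 2 * (lam r - 1 / 2) / T with hσ
  have hσ0 : 0 ≤ σ := by apply div_nonneg <;> linarith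
  have hσ1 : σ < 1 := by rw [hσ, div_lt_one hT0]; exact hTpos
  have hlam : lam r = σ * T / 2 + 1 / 2 := by rw [hσ]; field_simp; ring
  have hdiv : (lam r - 1 / 2) / T = σ / 2 := by rw [hσ]; field_simp
  -- the lower bound is the tangent line at `1 / T` of `y ↦ (1 - σ) y / (1 - σ T y)`, times `Λ`
  have key : ∀ q ∈ s, 0 < N q →
      Λ * (1 / T + (N q / M - 1 / T) / (1 - σ)) < L q := by
    intro q hq hNq
    have h := hcon q hq hNq
    rw [hdiv, hlam] at h
    set Y := N q / M * T with hY
    have hY0 : 0 < Y := by positivity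
    have hNY : N q = Y * M / T := by rw [hY]; field_simp
    rw [hNY] at h
    have h' : (1 - σ) * Λ * Y / T < L q * (1 - σ * Y) := by
      have e : (L q * (1 - σ * Y) - (1 - σ) * Λ * Y / T) * (M / 2) =
        ((σ * T / 2 + 1 / 2) * (Y * M / T) * (Λ - L q) + (Y * M / T + M) / 2 * L q) -
        (σ * T / 2 + 1 / 2 + 1 / 2 - σ / 2) * (Y * M / T) * Λ := by
        field_simp; ring
      have : 0 < (L q * (1 - σ * Y) - (1 - σ) * Λ * Y / T) * (M / 2) := by rw [e]; linarith
      have := (pos_iff_pos_of_mul_pos this).mpr (by positivity)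
      linarith
    have hD : 0 < 1 - σ * Y := by
      by_contra hD
      have : L q * (1 - σ * Y) ≤ 0 := mul_nonpos_of_nonneg_of_nonpos (hL q) (by linarith)
      have : 0 ≤ (1 - σ) * Λ * Y / T := by
        have : 0 ≤ 1 - σ := by linarith
        positivity
      linarith
    have hq' : N q / M = Y / T := by rw [hY]; field_simp
    rw [hq']
    have h1σ : 0 < 1 - σ := by linarith
    have hlt : (1 - σ) * Λ * Y / T / (1 - σ * Y) < L q := by
      rw [div_lt_iff₀ hD]; exact h'
    refine lt_of_le_of_lt ?_ hlt
    have e : (1 - σ) * Λ * Y / T / (1 - σ * Y) - Λ * (1 / T + (Y / T - 1 / T) / (1 - σ)) =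
        Λ * σ * (Y - 1) ^ 2 / (T * (1 - σ * Y) * (1 - σ)) := by
      have := hD.ne'
      have := h1σ.ne'
      field_simp
      ring
    have : 0 ≤ Λ * σ * (Y - 1) ^ 2 / (T * (1 - σ * Y) * (1 - σ)) := by positivity
    linarith
  have h1σ : 0 < 1 - σ := by linarith
  have key0 : ∀ q ∈ s, Λ * (1 / T + (N q / M - 1 / T) / (1 - σ)) ≤ L q := by
    intro q hq
    rcases (hN q).eq_or_lt with h | h
    · rw [hNL q h.symm, ← h]
      have e : 1 / T + (0 / M - 1 / T) / (1 - σ) = - (σ / (T * (1 - σ))) := by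
        have := h1σ.ne'
        field_simp; ring
      rw [e]
      have : 0 ≤ Λ * (σ / (T * (1 - σ))) := by positivity
      linarith
    · exact (key q hq h).le
  obtain ⟨q, hq, hNq⟩ : ∃ q ∈ s, 0 < N q := by
    by_contra! hc
    exact absurd (Finset.sum_nonpos hc) (not_le.mpr hpos)
  have hlt := Finset.sum_lt_sum key0 ⟨q, hq, key q hq hNq⟩
  have e : ∑ q ∈ s, Λ * (1 / T + (N q / M - 1 / T) / (1 - σ)) = Λ := by
    have e1 : ∑ q ∈ s, N q / M = 1 := by
      rw [← Finset.sum_div]; exact div_self hpos.ne'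
    have e2 : ∑ _q ∈ s, 1 / T = 1 := by
      rw [Finset.sum_const, nsmul_eq_mul, hcard, mul_one_div_cancel hT0.ne']
    rw [← Finset.mul_sum, Finset.sum_add_distrib, e2, ← Finset.sum_div,
      Finset.sum_sub_distrib, e1, e2]
    simp
  rw [e] at hlt
  exact lt_irrefl _ hlt

section Setup

variable {d n k : ℕ} (A : Matrix (Fin d) (Fin n) (ZMod 2))
    (U : Matrix (Fin d) (Fin k) (ZMod 2)) (V : Matrix (Fin k) (Fin n) (ZMod 2))

/-- The span of the first `m` vectors of the family `b`. -/
def spanFirst (m : ℕ) (b : Fin k → (Fin k → ZMod 2)) : Submodule (ZMod 2) (Fin k → ZMod 2) :=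
  Submodule.span (ZMod 2) (b '' {j : Fin k | (j : ℕ) < m})

/-- The span of the first `m` vectors of the family `b`, the vector `b i` being left out. -/
def spanOmit (m : ℕ) (b : Fin k → (Fin k → ZMod 2)) (i : Fin k) :
    Submodule (ZMod 2) (Fin k → ZMod 2) :=
  Submodule.span (ZMod 2) (b '' {j : Fin k | (j : ℕ) < m ∧ j ≠ i})

/-- The right-hand side of the theorem for `m` fixed vectors and coefficient `l` of the
sum of the `L_c`. -/
def bnd (l : ℝ) (m : ℕ) (b : Fin k → (Fin k → ZMod 2)) : ℝ :=
  (diffCount A (U * V) : ℝ)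
      + l * ∑ c : Fin k → ZMod 2, (if c ∉ spanFirst m b then (Lc A U V c : ℝ) else 0)
      + ∑ i : Fin k,
          (if (i : ℕ) < m then
            ((NX V ((fun w => b i + w) '' (spanOmit m b i : Set (Fin k → ZMod 2))) : ℝ)
              + (1 / 2) * (NX V {c | c ∉ spanFirst m b} : ℝ)) * Mc A U V (b i)
          else 0)

/-- The total weight under `w` of the coset `q` of `S`. -/
def cosetSum (S : Submodule (ZMod 2) (Fin k → ZMod 2)) (w : (Fin k → ZMod 2) → ℝ)
    (q : (Fin k → ZMod 2) ⧸ S) : ℝ :=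
  ∑ c : Fin k → ZMod 2, if S.mkQ c = q then w c else 0

/-! ### Elementary facts and the case `r = 0` -/

lemma NX_cast (X : Set (Fin k → ZMod 2)) :
    (NX V X : ℝ) = ∑ c : Fin k → ZMod 2, if c ∈ X then (nC V c : ℝ) else 0 := by
  simp [NX, apply_ite]

lemma Mc_nonneg (c : Fin k → ZMod 2) : 0 ≤ Mc A U V c := by
  unfold Mc; split_ifs <;> positivity

lemma Lc_eq_zero (c : Fin k → ZMod 2) (h : nC V c = 0) : Lc A U V c = 0 := by
  rw [nC, Finset.card_eq_zero] at h
  simp [Lc, h]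

lemma nC_mul_Mc (c : Fin k → ZMod 2) : (nC V c : ℝ) * Mc A U V c = Lc A U V c := by
  unfold Mc
  split_ifs with h
  · field_simp
  · have h0 : nC V c = 0 := by omega
    simp [h0, Lc_eq_zero A U V c h0]

/-- The nearest column to `U c` is at most as far from it as the columns in `J_c` are on average. -/
lemma nn_le_Mc (nn : (Fin d → ZMod 2) → Fin n)
    (hnn : ∀ (u : Fin d → ZMod 2) (j : Fin n),
      hammingDist (colA A (nn u)) u ≤ hammingDist (colA A j) u) (c : Fin k → ZMod 2) :
    (hammingDist (colA A (nn (U.mulVec c))) (U.mulVec c) : ℝ) ≤ Mc A U V c := by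
  unfold Mc
  split_ifs with h
  · rw [le_div_iff₀ (by exact_mod_cast h)]
    have : (Jc V c).card • hammingDist (colA A (nn (U.mulVec c))) (U.mulVec c) ≤ Lc A U V c :=
      Finset.card_nsmul_le_sum _ _ _ fun j _ => hnn _ j
    rw [smul_eq_mul, mul_comm] at this
    exact_mod_cast this
  · have := hammingDist_le_card_fintype (x := colA A (nn (U.mulVec c))) (y := U.mulVec c)
    rw [Fintype.card_fin] at this
    exact_mod_cast this

lemma diffCount_eq_sum : diffCount A (U * V) =
    ∑ j : Fin n, hammingDist (colA A j) (U.mulVec fun i => V i j) := by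
  unfold diffCount hammingDist
  rw [Finset.card_filter, Fintype.sum_prod_type_right]
  refine Finset.sum_congr rfl fun j _ => ?_
  rw [Finset.card_filter]
  rfl

/-- Grouping the columns of `V` by their value. -/
lemma sum_columns (f : (Fin k → ZMod 2) → ℝ) :
    ∑ j : Fin n, f (fun i => V i j) = ∑ c, (nC V c : ℝ) * f c := by
  rw [← Finset.sum_fiberwise (s := Finset.univ) (g := fun j : Fin n => (fun i => V i j))]
  refine Finset.sum_congr rfl fun c _ => ?_
  rw [Finset.sum_congr rfl (g := fun _ => f c), Finset.sum_const, nsmul_eq_mul]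
  · rfl
  · intro j hj
    rw [(Finset.mem_filter.mp hj).2]

lemma hammingDist_add_add_le (x y z w : Fin d → ZMod 2) :
    hammingDist (x + y) (z + w) ≤ hammingDist x z + hammingDist y w := by
  calc _ ≤ hammingDist (x + y) (z + y) + hammingDist (z + y) (z + w) :=
        hammingDist_triangle _ _ _
    _ = _ := by
        congr 1
        · simp [hammingDist]
        · simp [hammingDist]

lemma zmod_two_cases (a : ZMod 2) : a = 0 ∨ a = 1 := by
  revert a; decide

lemma hammingDist_sum_le {ι : Type*} (s : Finset ι) (x : ι → ZMod 2)
    (f g : ι → Fin d → ZMod 2) :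
    hammingDist (∑ i ∈ s, x i • f i) (∑ i ∈ s, x i • g i) ≤
      ∑ i ∈ s, if x i = 1 then hammingDist (f i) (g i) else 0 := by
  induction s using Finset.induction_on with
  | empty => simp
  | insert a s ha ih =>
    rw [Finset.sum_insert ha, Finset.sum_insert ha, Finset.sum_insert ha]
    refine (hammingDist_add_add_le _ _ _ _).trans (Nat.add_le_add ?_ ih)
    rcases zmod_two_cases (x a) with h | h <;> simp [h]

/-- The case `r = 0`. A column `a_j` with `V`-column `c = ∑ x_i b_i` is approximated by
`∑ x_i a_{nn(U b_i)}`; each `i` with `x_i = 1`, i.e. `c ∈ b_i + span^{\i}`, costs at most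
`M_{b_i}` on top of the distance from `a_j` to `U c`. -/
lemma Err_le_bnd (nn : (Fin d → ZMod 2) → Fin n)
    (hnn : ∀ (u : Fin d → ZMod 2) (j : Fin n),
      hammingDist (colA A (nn u)) u ≤ hammingDist (colA A j) u)
    (b : Fin k → (Fin k → ZMod 2)) (hb : LinearIndependent (ZMod 2) b) :
    (Err A U nn b : ℝ) ≤ bnd A U V 0 k b := by
  have hspan : ⊤ ≤ Submodule.span (ZMod 2) (Set.range b) := by
    rw [hb.span_eq_top_of_card_eq_finrank' (by simp)]
  let B := Module.Basis.mk hb hspan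
  have hrepr : ∀ c, ∑ i, B.repr c i • b i = c := by
    intro c
    conv_rhs => rw [← B.sum_repr c]
    simp [B]
  have hcol : ∀ j : Fin n, ((⨅ x : Fin k → ZMod 2, hammingDist (colA A j)
        (∑ i : Fin k, x i • colA A (nn (U.mulVec (b i)))) : ℕ) : ℝ) ≤
      hammingDist (colA A j) (U.mulVec fun i => V i j) +
        ∑ i, if B.repr (fun i => V i j) i = 1 then Mc A U V (b i) else 0 := by
    intro j
    set c : Fin k → ZMod 2 := fun i => V i j
    have h1 : (⨅ x : Fin k → ZMod 2, hammingDist (colA A j)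
        (∑ i : Fin k, x i • colA A (nn (U.mulVec (b i))))) ≤
        hammingDist (colA A j) (∑ i : Fin k, B.repr c i • colA A (nn (U.mulVec (b i)))) :=
      ciInf_le' _ (fun i => B.repr c i)
    have h2 : U.mulVec c = ∑ i, B.repr c i • U.mulVec (b i) := by
      conv_lhs => rw [← hrepr c]
      rw [← Matrix.mulVecLin_apply, map_sum]
      simp
    have h3 := hammingDist_triangle (colA A j) (U.mulVec c)
      (∑ i : Fin k, B.repr c i • colA A (nn (U.mulVec (b i))))
    have h4 := hammingDist_sum_le Finset.univ (fun i => B.repr c i)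
      (fun i => U.mulVec (b i)) (fun i => colA A (nn (U.mulVec (b i))))
    rw [← h2] at h4
    have h5 : ((∑ i, if B.repr c i = 1 then hammingDist (U.mulVec (b i))
        (colA A (nn (U.mulVec (b i)))) else 0 : ℕ) : ℝ) ≤
        ∑ i, if B.repr c i = 1 then Mc A U V (b i) else 0 := by
      push_cast
      refine Finset.sum_le_sum fun i _ => ?_
      split_ifs
      · rw [hammingDist_comm]; exact nn_le_Mc A U V nn hnn _
      · exact le_rfl
    refine le_trans ?_ (add_le_add_right h5 _)
    exact_mod_cast h1.trans (h3.trans (Nat.add_le_add_left h4 _))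
  have hsum : (Err A U nn b : ℝ) ≤ (diffCount A (U * V) : ℝ) +
      ∑ i, (∑ c, if B.repr c i = 1 then (nC V c : ℝ) else 0) * Mc A U V (b i) := by
    unfold Err
    rw [diffCount_eq_sum]
    push_cast
    refine (Finset.sum_le_sum fun j _ => hcol j).trans ?_
    rw [Finset.sum_add_distrib, sum_columns V
      (fun c => ∑ i, if B.repr c i = 1 then Mc A U V (b i) else 0)]
    refine add_le_add_right (le_of_eq ?_) _
    simp_rw [Finset.mul_sum, Finset.sum_mul]
    rw [Finset.sum_comm]
    refine Finset.sum_congr rfl fun i _ => Finset.sum_congr rfl fun c _ => ?_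
    split_ifs <;> simp
  refine hsum.trans ?_
  unfold bnd
  rw [zero_mul, add_zero]
  refine add_le_add_right (Finset.sum_le_sum fun i _ => ?_) _
  rw [if_pos i.2]
  refine mul_le_mul_of_nonneg_right ?_ (Mc_nonneg A U V _)
  refine le_trans ?_ (le_add_of_nonneg_right (by positivity))
  rw [NX_cast]
  refine Finset.sum_le_sum fun c _ => ?_
  split_ifs with h1 h2 h2
  · exact le_rfl
  · refine absurd ⟨∑ j ∈ Finset.univ.erase i, B.repr c j • b j, ?_, ?_⟩ h2
    · refine Submodule.sum_mem _ fun j hj => Submodule.smul_mem _ _ (Submodule.subset_span ?_)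
      exact ⟨j, ⟨j.2, Finset.ne_of_mem_erase hj⟩, rfl⟩
    · conv_rhs => rw [← hrepr c, ← Finset.add_sum_erase _ _ (Finset.mem_univ i), h1, one_smul]
  · positivity
  · exact le_rfl

/-! ### Adjoining one vector -/

/-- Over GF(2), `span(s, c)` is the union of `span s` and its coset through `c`. -/
lemma not_mem_span_insert_iff (s : Set (Fin k → ZMod 2)) (c x : Fin k → ZMod 2) :
    x ∉ Submodule.span (ZMod 2) (insert c s) ↔
      x ∉ Submodule.span (ZMod 2) s ∧
        (Submodule.span (ZMod 2) s).mkQ x ≠ (Submodule.span (ZMod 2) s).mkQ c := by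
  rw [← not_or, not_iff_not, Submodule.mem_span_insert]
  simp only [Submodule.mkQ_apply, Submodule.Quotient.eq]
  constructor
  · rintro ⟨a, z, hz, rfl⟩
    have := zmod_two_cases a
    rcases this with rfl | rfl
    · left; simpa using hz
    · right; simpa using hz
  · rintro (h | h)
    · exact ⟨0, x, h, by simp⟩
    · exact ⟨1, x - c, h, by simp⟩

/-- The mass of `S^c` after adjoining `c` to `S` is the old one minus the mass of `c + S`. -/
lemma sum_not_mem_span_insert (s : Set (Fin k → ZMod 2)) (c : Fin k → ZMod 2)
    (hc : c ∉ Submodule.span (ZMod 2) s) (w : (Fin k → ZMod 2) → ℝ) :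
    ∑ x, (if x ∉ Submodule.span (ZMod 2) (insert c s) then w x else 0) =
      ∑ x, (if x ∉ Submodule.span (ZMod 2) s then w x else 0) -
        cosetSum (Submodule.span (ZMod 2) s) w ((Submodule.span (ZMod 2) s).mkQ c) := by
  rw [cosetSum, ← Finset.sum_sub_distrib]
  refine Finset.sum_congr rfl fun x _ => ?_
  have hiff := not_mem_span_insert_iff s c x
  by_cases h1 : (Submodule.span (ZMod 2) s).mkQ x = (Submodule.span (ZMod 2) s).mkQ c
  · have hx : x ∉ Submodule.span (ZMod 2) s := by
      intro hx
      apply hc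
      rw [← Submodule.Quotient.mk_eq_zero]
      rw [← Submodule.Quotient.mk_eq_zero] at hx
      exact h1.symm.trans hx
    rw [if_neg (fun h => (hiff.mp h).2 h1), if_pos hx, if_pos h1, sub_self]
  · by_cases hx : x ∈ Submodule.span (ZMod 2) s
    · rw [if_neg (fun h => (hiff.mp h).1 hx), if_neg (not_not.mpr hx), if_neg h1, sub_zero]
    · rw [if_pos (hiff.mpr ⟨hx, h1⟩), if_pos hx, if_neg h1, sub_zero]

/-- The mass of the vectors of the coset `c + S` at which `φ` differs from its value at `c`. -/
def flipSum (S : Submodule (ZMod 2) (Fin k → ZMod 2)) (w : (Fin k → ZMod 2) → ℝ)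
    (φ : (Fin k → ZMod 2) →ₗ[ZMod 2] ZMod 2) (c : Fin k → ZMod 2) : ℝ :=
  ∑ x, if S.mkQ x = S.mkQ c ∧ φ x ≠ φ c then w x else 0

/-- The bound after `c` is adjoined as the vector of index `m`: the mass outside the span drops by
that of the coset of `c`, the coset `b_i + span^{\i}` gains `b_i + c + span^{\i}`, whose mass is at
most `flipSum`, and a new term with `M_c` appears. -/
lemma bnd_update_le (l : ℝ) (m : ℕ) (hm : m < k) (b : Fin k → (Fin k → ZMod 2))
    (c : Fin k → ZMod 2) (hc : c ∉ spanFirst m b)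
    (φ : Fin k → ((Fin k → ZMod 2) →ₗ[ZMod 2] ZMod 2))
    (hφ : ∀ i : Fin k, (i : ℕ) < m → φ i (b i) = 1 ∧ ∀ w ∈ spanOmit m b i, φ i w = 0) :
    bnd A U V l (m + 1) (Function.update b ⟨m, hm⟩ c) ≤
      (diffCount A (U * V) : ℝ)
      + l * (∑ x, (if x ∉ spanFirst m b then (Lc A U V x : ℝ) else 0)
          - cosetSum (spanFirst m b) (fun x => (Lc A U V x : ℝ)) ((spanFirst m b).mkQ c))
      + ∑ i : Fin k,
          (if (i : ℕ) < m then
            ((NX V ((fun w => b i + w) '' (spanOmit m b i : Set (Fin k → ZMod 2))) : ℝ)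
              + flipSum (spanFirst m b) (fun x => (nC V x : ℝ)) (φ i) c
              + (1 / 2) * (∑ x, (if x ∉ spanFirst m b then (nC V x : ℝ) else 0)
                - cosetSum (spanFirst m b) (fun x => (nC V x : ℝ)) ((spanFirst m b).mkQ c)))
              * Mc A U V (b i)
          else 0)
      + (cosetSum (spanFirst m b) (fun x => (nC V x : ℝ)) ((spanFirst m b).mkQ c)
          + ∑ x, (if x ∉ spanFirst m b then (nC V x : ℝ) else 0)) / 2 * Mc A U V c := by
  set b' := Function.update b ⟨m, hm⟩ c with hb'
  have hne : ∀ i : Fin k, (i : ℕ) < m → b' i = b i := by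
    intro i hi
    exact Function.update_of_ne (fun h => by simp [h] at hi) _ _
  have hnew : b' ⟨m, hm⟩ = c := Function.update_self _ _ _
  have h1 : spanFirst (m + 1) b' =
      Submodule.span (ZMod 2) (insert c (b '' {j : Fin k | (j : ℕ) < m})) := by
    unfold spanFirst
    congr 1
    ext x
    constructor
    · rintro ⟨j, hj, rfl⟩
      rcases Nat.lt_succ_iff_lt_or_eq.mp hj with h | h
      · exact Or.inr ⟨j, h, (hne j h).symm⟩
      · left; rw [← hnew]; congr 1; exact Fin.ext h
    · rintro (rfl | ⟨j, hj, rfl⟩)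
      · exact ⟨⟨m, hm⟩, Nat.lt_succ_self m, hnew⟩
      · exact ⟨j, Nat.lt_succ_of_lt hj, hne j hj⟩
  have h2 : ∀ i : Fin k, (i : ℕ) < m → spanOmit (m + 1) b' i =
      Submodule.span (ZMod 2) (insert c (b '' {j : Fin k | (j : ℕ) < m ∧ j ≠ i})) := by
    intro i hi
    unfold spanOmit
    congr 1
    ext x
    constructor
    · rintro ⟨j, ⟨hj, hji⟩, rfl⟩
      rcases Nat.lt_succ_iff_lt_or_eq.mp hj with h | h
      · exact Or.inr ⟨j, ⟨h, hji⟩, (hne j h).symm⟩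
      · left; rw [← hnew]; congr 1; exact Fin.ext h
    · rintro (rfl | ⟨j, ⟨hj, hji⟩, rfl⟩)
      · exact ⟨⟨m, hm⟩, ⟨Nat.lt_succ_self m, fun h => by simp [← h] at hi⟩, hnew⟩
      · exact ⟨j, ⟨Nat.lt_succ_of_lt hj, hji⟩, hne j hj⟩
  have h3 : spanOmit (m + 1) b' ⟨m, hm⟩ = spanFirst m b := by
    unfold spanOmit spanFirst
    congr 1
    ext x
    constructor
    · rintro ⟨j, ⟨hj, hji⟩, rfl⟩
      have h : (j : ℕ) < m :=
        lt_of_le_of_ne (Nat.lt_succ_iff.mp hj) fun h => hji (Fin.ext h)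
      exact ⟨j, h, (hne j h).symm⟩
    · rintro ⟨j, hj, rfl⟩
      exact ⟨j, ⟨Nat.lt_succ_of_lt hj, fun h => by simp [h] at hj⟩, hne j hj⟩
  have hN : (NX V {x | x ∉ spanFirst (m + 1) b'} : ℝ) =
      ∑ x, (if x ∉ spanFirst m b then (nC V x : ℝ) else 0)
        - cosetSum (spanFirst m b) (fun x => (nC V x : ℝ)) ((spanFirst m b).mkQ c) := by
    rw [NX_cast, h1]
    refine Eq.trans (Finset.sum_congr rfl fun x _ => ?_)
      (sum_not_mem_span_insert _ c hc fun x => (nC V x : ℝ))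
    simp only [Set.mem_ofPred_eq]
    congr
  have hL : ∑ x, (if x ∉ spanFirst (m + 1) b' then (Lc A U V x : ℝ) else 0) =
      ∑ x, (if x ∉ spanFirst m b then (Lc A U V x : ℝ) else 0)
        - cosetSum (spanFirst m b) (fun x => (Lc A U V x : ℝ)) ((spanFirst m b).mkQ c) := by
    rw [h1]
    exact sum_not_mem_span_insert _ c hc fun x => (Lc A U V x : ℝ)
  -- `b i + span(T, c)` is the union of `b i + T` and `b i + c + T`
  have hcoset : ∀ i : Fin k, (i : ℕ) < m →
      (NX V ((fun w => b i + w) '' (spanOmit (m + 1) b' i : Set (Fin k → ZMod 2))) : ℝ) ≤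
      (NX V ((fun w => b i + w) '' (spanOmit m b i : Set (Fin k → ZMod 2))) : ℝ)
        + flipSum (spanFirst m b) (fun x => (nC V x : ℝ)) (φ i) c := by
    intro i hi
    rw [NX_cast, NX_cast, flipSum, ← Finset.sum_add_distrib]
    refine Finset.sum_le_sum fun x _ => ?_
    by_cases hx : x ∈ (fun w => b i + w) '' (spanOmit (m + 1) b' i : Set (Fin k → ZMod 2))
    · rw [if_pos hx]
      obtain ⟨w, hw, rfl⟩ := hx
      rw [SetLike.mem_coe, h2 i hi, Submodule.mem_span_insert] at hw
      obtain ⟨a, z, hz, rfl⟩ := hw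
      have hz' : z ∈ spanOmit m b i := hz
      have := zmod_two_cases a
      rcases this with rfl | rfl
      · rw [if_pos ⟨z, hz', by simp⟩]
        refine le_add_of_nonneg_right ?_
        split_ifs <;> positivity
      · have hcond : (spanFirst m b).mkQ (b i + ((1 : ZMod 2) • c + z)) = (spanFirst m b).mkQ c ∧
            φ i (b i + ((1 : ZMod 2) • c + z)) ≠ φ i c := by
          constructor
          · rw [← sub_eq_zero, ← map_sub, Submodule.mkQ_apply, Submodule.Quotient.mk_eq_zero]
            have e : b i + ((1 : ZMod 2) • c + z) - c = b i + z := by rw [one_smul]; abel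
            rw [e]
            refine Submodule.add_mem _ (Submodule.subset_span ⟨i, hi, rfl⟩) ?_
            exact Submodule.span_mono (Set.image_mono fun j hj => hj.1) hz'
          · rw [map_add, map_add, one_smul, (hφ i hi).1, (hφ i hi).2 z hz']
            generalize φ i c = y
            revert y; decide
        beta_reduce
        rw [if_pos hcond]
        refine le_add_of_nonneg_left ?_
        split_ifs <;> positivity
    · rw [if_neg hx]
      refine add_nonneg ?_ ?_ <;> split_ifs <;> positivity
  have hself : (NX V ((fun w => c + w) '' (spanFirst m b : Set (Fin k → ZMod 2))) : ℝ) =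
      cosetSum (spanFirst m b) (fun x => (nC V x : ℝ)) ((spanFirst m b).mkQ c) := by
    rw [NX_cast, cosetSum]
    refine Finset.sum_congr rfl fun x _ => ?_
    congr 1
    rw [eq_iff_iff, ← sub_eq_zero, ← map_sub, Submodule.mkQ_apply, Submodule.Quotient.mk_eq_zero]
    constructor
    · rintro ⟨w, hw, rfl⟩; simpa using hw
    · intro h; exact ⟨x - c, h, by simp⟩
  unfold bnd
  rw [hL, hN, add_assoc _ (∑ i : Fin k, _) _]
  refine add_le_add_right ?_ _
  rw [← Finset.add_sum_erase _ _ (Finset.mem_univ (⟨m, hm⟩ : Fin k)),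
    ← Finset.add_sum_erase (a := (⟨m, hm⟩ : Fin k)) Finset.univ
      (fun i : Fin k => if (i : ℕ) < m then _ else (0 : ℝ)) (Finset.mem_univ _)]
  simp only [Nat.lt_succ_self, if_true, lt_irrefl, if_false, zero_add]
  rw [hnew, h3, hself, add_comm]
  refine add_le_add (Finset.sum_le_sum fun i hi => ?_) (le_of_eq (by ring))
  have him : (i : ℕ) ≠ m := fun h => (Finset.ne_of_mem_erase hi) (Fin.ext h)
  by_cases h : (i : ℕ) < m
  · rw [if_pos h, if_pos (Nat.lt_succ_of_lt h), hne i h]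
    exact mul_le_mul_of_nonneg_right (add_le_add_left (hcoset i h) _) (Mc_nonneg A U V _)
  · rw [if_neg h, if_neg (by omega)]


/-! ### Sums over cosets -/

lemma cosetSum_nonneg (S : Submodule (ZMod 2) (Fin k → ZMod 2)) (w : (Fin k → ZMod 2) → ℝ)
    (hw : ∀ c, 0 ≤ w c) (q : (Fin k → ZMod 2) ⧸ S) : 0 ≤ cosetSum S w q := by
  refine Finset.sum_nonneg fun c _ => ?_
  split_ifs
  exacts [hw c, le_rfl]

lemma sum_cosetSum (S : Submodule (ZMod 2) (Fin k → ZMod 2)) (w : (Fin k → ZMod 2) → ℝ) :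
    ∑ q ∈ Finset.univ.erase (0 : (Fin k → ZMod 2) ⧸ S), cosetSum S w q =
      ∑ x, if x ∉ S then w x else 0 := by
  unfold cosetSum
  rw [Finset.sum_comm]
  refine Finset.sum_congr rfl fun x _ => ?_
  rw [Finset.sum_ite_eq]
  have : S.mkQ x ∈ Finset.univ.erase (0 : (Fin k → ZMod 2) ⧸ S) ↔ x ∉ S := by
    simp
  by_cases h : x ∈ S
  · rw [if_neg (fun h' => this.mp h' h), if_neg (not_not.mpr h)]
  · rw [if_pos (this.mpr h), if_pos h]

/-- If `p₀` and `p₁` are the masses of the two halves of the coset `q` cut out by `φ`, the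
left-hand side is `2 p₀ p₁ ≤ (p₀ + p₁)² / 2`. -/
lemma sum_flipSum_le (S : Submodule (ZMod 2) (Fin k → ZMod 2)) (w : (Fin k → ZMod 2) → ℝ)
    (φ : (Fin k → ZMod 2) →ₗ[ZMod 2] ZMod 2) (q : (Fin k → ZMod 2) ⧸ S) :
    ∑ c, (if S.mkQ c = q then w c * flipSum S w φ c else 0) ≤ cosetSum S w q ^ 2 / 2 := by
  set p₀ := ∑ x, if S.mkQ x = q ∧ φ x = 0 then w x else 0 with hp₀
  set p₁ := ∑ x, if S.mkQ x = q ∧ φ x = 1 then w x else 0 with hp₁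
  have hp : cosetSum S w q = p₀ + p₁ := by
    rw [hp₀, hp₁, ← Finset.sum_add_distrib]
    refine Finset.sum_congr rfl fun x _ => ?_
    by_cases hq : S.mkQ x = q
    · rcases zmod_two_cases (φ x) with h | h <;> rw [hq, h] <;> simp
    · rw [if_neg hq, if_neg (fun h => hq h.1), if_neg (fun h => hq h.1), add_zero]
  have hs : ∑ c, (if S.mkQ c = q then w c * flipSum S w φ c else 0) = p₀ * p₁ + p₁ * p₀ := by
    conv_rhs => rw [hp₀, Finset.sum_mul, ← hp₀]
    conv_rhs => arg 2; rw [hp₁, Finset.sum_mul]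
    rw [← Finset.sum_add_distrib]
    refine Finset.sum_congr rfl fun c _ => ?_
    by_cases hq : S.mkQ c = q
    · rcases zmod_two_cases (φ c) with h | h
      · have : flipSum S w φ c = p₁ := by
          rw [hp₁, flipSum]
          refine Finset.sum_congr rfl fun x _ => ?_
          rw [hq, h]
          rcases zmod_two_cases (φ x) with h' | h' <;> simp [h']
        simp [hq, h, this]
      · have : flipSum S w φ c = p₀ := by
          rw [hp₀, flipSum]
          refine Finset.sum_congr rfl fun x _ => ?_
          rw [hq, h]
          rcases zmod_two_cases (φ x) with h' | h' <;> simp [h']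
        simp [hq, h, this]
    · rw [if_neg hq, if_neg (fun h => hq h.1), if_neg (fun h => hq h.1)]; simp
  rw [hs, hp]
  nlinarith [sq_nonneg (p₀ - p₁)]

lemma card_nonzero_quotient (r m : ℕ) (hm : m + r = k)
    (b : Fin k → (Fin k → ZMod 2)) (hb : LinearIndepOn (ZMod 2) b {j : Fin k | (j : ℕ) < m}) :
    (Finset.univ.erase (0 : (Fin k → ZMod 2) ⧸ spanFirst m b)).card = 2 ^ r - 1 := by
  have hfin : Module.finrank (ZMod 2) (spanFirst m b) = m := by
    have h := finrank_span_eq_card (R := ZMod 2) hb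
    have e : Set.range (fun x : {j : Fin k | (j : ℕ) < m} => b x) =
        b '' {j : Fin k | (j : ℕ) < m} := (Set.image_eq_range b _).symm
    rw [e] at h
    unfold spanFirst
    rw [h, Fintype.card_subtype]
    have := Fin.card_filter_val_lt (n := k) (m := m)
    rw [min_eq_right (by omega)] at this
    simpa using this
  have hq := Submodule.finrank_quotient_add_finrank (spanFirst m b)
  rw [hfin, Module.finrank_fin_fun] at hq
  rw [Finset.card_erase_of_mem (Finset.mem_univ _), Finset.card_univ,
    Module.card_eq_pow_finrank (K := ZMod 2), ZMod.card]
  congr 2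
  omega


/-! ### The inductive step -/

/-- The choice of a vector inside a coset `s`: the bound is averaged over `s` with weights `w`.
In the application `w c = n_c`, `D c = M_c`, and `G i c` is the mass of `b_i + c + span^{\i}`,
whose average over the coset is at most half the mass of the coset. -/
lemma exists_le_of_average {C ι : Type*} (s : Finset C) (I : Finset ι) (w : C → ℝ)
    (hw : ∀ c, 0 ≤ w c) (hpos : 0 < ∑ c ∈ s, w c) (F M : ι → ℝ) (G : ι → C → ℝ) (D : C → ℝ)
    (hM : ∀ i, 0 ≤ M i) (hG : ∀ i ∈ I, ∑ c ∈ s, w c * G i c ≤ (∑ c ∈ s, w c) ^ 2 / 2)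
    (N K K' : ℝ)
    (hK : (∑ c ∈ s, w c) * K + (∑ c ∈ s, w c + N) / 2 * ∑ c ∈ s, w c * D c ≤
      (∑ c ∈ s, w c) * K') :
    ∃ c ∈ s, K + ∑ i ∈ I, (F i + G i c + 1 / 2 * (N - ∑ c ∈ s, w c)) * M i
        + (∑ c ∈ s, w c + N) / 2 * D c ≤ K' + ∑ i ∈ I, (F i + 1 / 2 * N) * M i := by
  set W := ∑ c ∈ s, w c with hW
  by_contra! hcon
  obtain ⟨c₀, hc₀, hw₀⟩ : ∃ c ∈ s, 0 < w c := by
    by_contra! hc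
    exact absurd (Finset.sum_nonpos hc) (not_le.mpr hpos)
  have hlt := Finset.sum_lt_sum
    (fun c hc => mul_le_mul_of_nonneg_left (hcon c hc).le (hw c))
    ⟨c₀, hc₀, mul_lt_mul_of_pos_left (hcon c₀ hc₀) hw₀⟩
  rw [← Finset.sum_mul, ← hW] at hlt
  have hexp : ∑ c ∈ s, w c * (K + ∑ i ∈ I, (F i + G i c + 1 / 2 * (N - W)) * M i
        + (W + N) / 2 * D c) =
      W * K + ∑ i ∈ I, (W * F i + ∑ c ∈ s, w c * G i c + W * (1 / 2 * (N - W))) * M i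
        + (W + N) / 2 * ∑ c ∈ s, w c * D c := by
    simp only [mul_add, Finset.sum_add_distrib, ← Finset.sum_mul, ← hW]
    congr 1
    · congr 1
      simp only [Finset.mul_sum]
      rw [Finset.sum_comm]
      refine Finset.sum_congr rfl fun i _ => ?_
      rw [hW]
      simp only [add_mul, Finset.sum_mul, mul_add, Finset.sum_add_distrib, mul_assoc]
    · rw [Finset.mul_sum]
      exact Finset.sum_congr rfl fun c _ => by ring
  have hI : ∑ i ∈ I, (W * F i + ∑ c ∈ s, w c * G i c + W * (1 / 2 * (N - W))) * M i ≤
      W * ∑ i ∈ I, (F i + 1 / 2 * N) * M i := by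
    rw [Finset.mul_sum]
    refine Finset.sum_le_sum fun i hi => ?_
    rw [← mul_assoc W (F i + 1 / 2 * N)]
    refine mul_le_mul_of_nonneg_right ?_ (hM i)
    have := hG i hi
    nlinarith
  rw [hexp, mul_add] at hlt
  linarith

/-- Functionals playing the role of the `i`-th coordinate on the span of the first `m`
vectors. -/
lemma exists_coord_functional (m : ℕ) (b : Fin k → (Fin k → ZMod 2))
    (hb : LinearIndepOn (ZMod 2) b {j : Fin k | (j : ℕ) < m}) :
    ∃ φ : Fin k → ((Fin k → ZMod 2) →ₗ[ZMod 2] ZMod 2),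
      ∀ i : Fin k, (i : ℕ) < m → φ i (b i) = 1 ∧ ∀ w ∈ spanOmit m b i, φ i w = 0 := by
  have : ∀ i : Fin k, ∃ f : (Fin k → ZMod 2) →ₗ[ZMod 2] ZMod 2,
      (i : ℕ) < m → f (b i) = 1 ∧ ∀ w ∈ spanOmit m b i, f w = 0 := by
    intro i
    by_cases hi : (i : ℕ) < m
    · have hnot : b i ∉ spanOmit m b i := by
        have h := linearIndepOn_iff_notMem_span.mp hb i hi
        have e : {j : Fin k | (j : ℕ) < m} \ {i} = {j : Fin k | (j : ℕ) < m ∧ j ≠ i} := by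
          ext j; simp
        rwa [e] at h
      obtain ⟨f, hf, hle⟩ := Submodule.exists_le_ker_of_notMem hnot
      exact ⟨f, fun _ => ⟨(zmod_two_cases _).resolve_left hf, fun w hw => hle hw⟩⟩
    · exact ⟨0, fun h => absurd h hi⟩
  choose φ hφ using this
  exact ⟨φ, hφ⟩

/-- The inductive step: some vector `c` outside the span of the first `m` vectors can be adjoined
without the bound getting worse. The coset of `c` comes from `exists_good_class`, the vector
within the coset from `exists_le_of_average`. -/
lemma exists_bnd_update_le (r m : ℕ) (hm : m + (r + 1) = k) (b : Fin k → (Fin k → ZMod 2))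
    (hb : LinearIndepOn (ZMod 2) b {j : Fin k | (j : ℕ) < m}) :
    ∃ c, c ∉ spanFirst m b ∧
      bnd A U V (lam r) (m + 1) (Function.update b ⟨m, by omega⟩ c) ≤
        bnd A U V (lam (r + 1)) m b := by
  obtain ⟨φ, hφ⟩ := exists_coord_functional m b hb
  have hcard := card_nonzero_quotient (r + 1) m hm b hb
  have hstep := fun c hc => bnd_update_le A U V (lam r) m (by omega) b c hc φ hφ
  have hNX : (NX V {c | c ∉ spanFirst m b} : ℝ) =
      ∑ x, (if x ∉ spanFirst m b then (nC V x : ℝ) else 0) := by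
    rw [NX_cast]
    refine Finset.sum_congr rfl fun x _ => ?_
    simp only [Set.mem_ofPred_eq]
    congr
  have hn0 : ∀ x, 0 ≤ (nC V x : ℝ) := fun x => Nat.cast_nonneg _
  have hL0 : ∀ x, 0 ≤ (Lc A U V x : ℝ) := fun x => Nat.cast_nonneg _
  have hNL : ∀ q, cosetSum (spanFirst m b) (fun x => (nC V x : ℝ)) q = 0 →
      cosetSum (spanFirst m b) (fun x => (Lc A U V x : ℝ)) q = 0 := by
    intro q hq
    unfold cosetSum at hq ⊢
    rw [Finset.sum_eq_zero_iff_of_nonneg (fun x _ => by split_ifs; exacts [hn0 x, le_rfl])] at hq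
    refine Finset.sum_eq_zero fun x hx => ?_
    have := hq x hx
    beta_reduce at this ⊢
    split_ifs at this ⊢
    · exact_mod_cast Lc_eq_zero A U V x (by exact_mod_cast this)
    · rfl
  have hsumN := sum_cosetSum (spanFirst m b) (fun x => (nC V x : ℝ))
  have hsumL := sum_cosetSum (spanFirst m b) (fun x => (Lc A U V x : ℝ))
  set S := spanFirst m b with hS
  set Nq := cosetSum S (fun x => (nC V x : ℝ)) with hNq
  set Lq := cosetSum S (fun x => (Lc A U V x : ℝ)) with hLq
  have hNq0 : ∀ q, 0 ≤ Nq q := cosetSum_nonneg S _ hn0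
  have hLq0 : ∀ q, 0 ≤ Lq q := cosetSum_nonneg S _ hL0
  have hNtot : 0 ≤ ∑ q ∈ Finset.univ.erase (0 : (Fin k → ZMod 2) ⧸ S), Nq q :=
    Finset.sum_nonneg fun q _ => hNq0 q
  rcases hNtot.eq_or_lt with h0 | hpos
  · -- no column lies outside `S`: any vector outside `S` will do
    have hall := (Finset.sum_eq_zero_iff_of_nonneg fun q _ => hNq0 q).mp h0.symm
    have hne : (Finset.univ.erase (0 : (Fin k → ZMod 2) ⧸ S)).Nonempty := by
      rw [← Finset.card_pos, hcard]
      have : 2 ≤ 2 ^ (r + 1) := by rw [pow_succ]; have := Nat.one_le_two_pow (n := r); omega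
      omega
    obtain ⟨q, hq⟩ := hne
    obtain ⟨c, rfl⟩ := S.mkQ_surjective q
    have hc : c ∉ S := by
      intro h
      exact Finset.ne_of_mem_erase hq ((Submodule.Quotient.mk_eq_zero S).mpr h)
    refine ⟨c, hc, (hstep c hc).trans ?_⟩
    have hLtot : ∑ x, (if x ∉ S then (Lc A U V x : ℝ) else 0) = 0 := by
      rw [← hsumL]
      exact Finset.sum_eq_zero fun q hq => hNL q (hall q hq)
    have hflip : ∀ i, flipSum S (fun x => (nC V x : ℝ)) (φ i) c ≤ 0 := by
      intro i
      rw [← hall _ hq, hNq]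
      unfold flipSum cosetSum
      refine Finset.sum_le_sum fun x _ => ?_
      by_cases h : S.mkQ x = S.mkQ c
      · rw [if_pos h]; split_ifs; exacts [le_rfl, hn0 x]
      · rw [if_neg h, if_neg fun h' => h h'.1]
    unfold bnd
    rw [hNX, ← hS, hLtot, ← hsumN, ← h0, hNL _ (hall _ hq), hall _ hq]
    simp only [sub_zero, mul_zero, add_zero, zero_div, zero_mul]
    refine add_le_add_right (Finset.sum_le_sum fun i _ => ?_) _
    split_ifs
    · exact mul_le_mul_of_nonneg_right (by linarith [hflip i]) (Mc_nonneg A U V _)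
    · exact le_rfl
  · obtain ⟨q, hq, hqpos, hineq⟩ := exists_good_class _ r hcard Nq Lq hNq0 hLq0 hNL hpos
    have hfN : ∑ c ∈ Finset.univ.filter (fun c => S.mkQ c = q), (nC V c : ℝ) = Nq q := by
      rw [Finset.sum_filter]; rfl
    have hfL : ∑ c ∈ Finset.univ.filter (fun c => S.mkQ c = q),
        (nC V c : ℝ) * Mc A U V c = Lq q := by
      simp only [nC_mul_Mc]
      rw [Finset.sum_filter]; rfl
    rw [hsumN, hsumL] at hineq
    set N := ∑ x, (if x ∉ S then (nC V x : ℝ) else 0)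
    set L := ∑ x, (if x ∉ S then (Lc A U V x : ℝ) else 0)
    obtain ⟨c, hcq, hle⟩ := exists_le_of_average
      (Finset.univ.filter fun c => S.mkQ c = q)
      (Finset.univ.filter fun i : Fin k => (i : ℕ) < m)
      (fun c => (nC V c : ℝ)) hn0 (by rw [hfN]; exact hqpos)
      (fun i => (NX V ((fun w => b i + w) '' (spanOmit m b i : Set (Fin k → ZMod 2))) : ℝ))
      (fun i => Mc A U V (b i))
      (fun i c => flipSum S (fun x => (nC V x : ℝ)) (φ i) c)
      (fun c => Mc A U V c) (fun i => Mc_nonneg A U V _)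
      (fun i _ => by
        rw [hfN, Finset.sum_filter]
        exact sum_flipSum_le S (fun x => (nC V x : ℝ)) (φ i) q)
      N (diffCount A (U * V) + lam r * (L - Lq q)) (diffCount A (U * V) + lam (r + 1) * L)
      (by rw [hfN, hfL]; linarith)
    have hcq' : S.mkQ c = q := (Finset.mem_filter.mp hcq).2
    have hc : c ∉ S := by
      intro h
      exact Finset.ne_of_mem_erase hq
        (hcq'.symm.trans ((Submodule.Quotient.mk_eq_zero S).mpr h))
    refine ⟨c, hc, (hstep c hc).trans ?_⟩
    rw [hfN, Finset.sum_filter, Finset.sum_filter] at hle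
    unfold bnd
    rw [hNX, hcq']
    exact hle

/-- Only the first `m = k - r` vectors need to be independent; in this form the statement can be
proved by induction on `r`, replacing the vector of index `m` by the one to be adjoined. -/
lemma ErrR_le_bnd (nn : (Fin d → ZMod 2) → Fin n)
    (hnn : ∀ (u : Fin d → ZMod 2) (j : Fin n),
      hammingDist (colA A (nn u)) u ≤ hammingDist (colA A j) u) (r : ℕ) :
    ∀ (m : ℕ), m + r = k → ∀ b : Fin k → (Fin k → ZMod 2),
      LinearIndepOn (ZMod 2) b {j : Fin k | (j : ℕ) < m} →
      (ErrR A U nn r b : ℝ) ≤ bnd A U V (lam r) m b := by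
  induction r with
  | zero =>
    intro m hm b hb
    obtain rfl : m = k := by omega
    have e : {j : Fin m | (j : ℕ) < m} = Set.univ := by ext j; simp
    rw [e, linearIndepOn_univ_iff] at hb
    have h0 : lam 0 = 0 := by simp [lam]
    rw [h0]
    refine le_trans ?_ (Err_le_bnd A U V nn hnn b hb)
    unfold ErrR
    exact_mod_cast ciInf_le' _ (⟨b, fun _ _ => rfl⟩ :
      {c : Fin m → (Fin m → ZMod 2) // ∀ i : Fin m, (i : ℕ) < m - 0 → c i = b i})
  | succ r ih =>
    intro m hm b hb
    obtain ⟨c, hc, hle⟩ := exists_bnd_update_le A U V r m hm b hb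
    refine le_trans ?_ hle
    have hmk : m < k := by omega
    have hne : ∀ i : Fin k, (i : ℕ) < m → Function.update b ⟨m, hmk⟩ c i = b i := by
      intro i hi
      exact Function.update_of_ne (fun h => by simp [h] at hi) _ _
    refine le_trans ?_ (ih (m + 1) (by omega) (Function.update b ⟨m, hmk⟩ c) ?_)
    · unfold ErrR
      have : Nonempty {c' : Fin k → (Fin k → ZMod 2) // ∀ i : Fin k, (i : ℕ) < k - r →
          c' i = Function.update b ⟨m, hmk⟩ c i} := ⟨⟨_, fun _ _ => rfl⟩⟩
      refine Nat.cast_le.mpr (le_ciInf fun c' => ?_)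
      exact ciInf_le' _ (⟨c'.1, fun i hi => (c'.2 i (by omega)).trans (hne i (by omega))⟩ :
        {c : Fin k → (Fin k → ZMod 2) // ∀ i : Fin k, (i : ℕ) < k - (r + 1) → c i = b i})
    · have e : {j : Fin k | (j : ℕ) < m + 1} = insert ⟨m, hmk⟩ {j : Fin k | (j : ℕ) < m} := by
        ext j
        simp only [Set.mem_insert_iff, Set.mem_ofPred_eq, Fin.ext_iff]
        omega
      rw [e]
      refine LinearIndepOn.insert (hb.congr fun i hi => (hne i hi).symm) ?_
      have e' : Function.update b ⟨m, hmk⟩ c '' {j : Fin k | (j : ℕ) < m} =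
          b '' {j : Fin k | (j : ℕ) < m} := Set.image_congr fun i hi => hne i hi
      rw [e', Function.update_self]
      exact hc

end Setup

/-- Theorem (additive bounds): for linearly independent `b_1,…,b_k` and `0 ≤ r ≤ k`,
`Err^(r)(b_1,…,b_{k-r}) ≤ OPT_k + λ_r Σ_{c ∈ span^c(b_1,…,b_{k-r})} L_c
  + Σ_{i=1}^{k-r} f_i(b_1,…,b_{k-r}) M_{b_i}`,
where `f_i = N_{b_i + span^{\i}(b_1,…,b_{k-r})} + (1/2) N_{span^c(b_1,…,b_{k-r})}`. -/
theorem additive_bounds (d n k : ℕ) (hk : 1 ≤ k)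
    (A : Matrix (Fin d) (Fin n) (ZMod 2))
    (U : Matrix (Fin d) (Fin k) (ZMod 2)) (V : Matrix (Fin k) (Fin n) (ZMod 2))
    (hopt : ∀ (U' : Matrix (Fin d) (Fin k) (ZMod 2))
      (V' : Matrix (Fin k) (Fin n) (ZMod 2)),
      diffCount A (U * V) ≤ diffCount A (U' * V'))
    (nn : (Fin d → ZMod 2) → Fin n)
    (hnn : ∀ (u : Fin d → ZMod 2) (j : Fin n),
      hammingDist (colA A (nn u)) u ≤ hammingDist (colA A j) u)
    (b : Fin k → (Fin k → ZMod 2)) (hb : LinearIndependent (ZMod 2) b)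
    (r : ℕ) (hr : r ≤ k) :
    (ErrR A U nn r b : ℝ) ≤
      (diffCount A (U * V) : ℝ)
      + lam r * ∑ c : Fin k → ZMod 2,
          (if c ∉ Submodule.span (ZMod 2) (b '' {j : Fin k | (j : ℕ) < k - r})
            then (Lc A U V c : ℝ) else 0)
      + ∑ i : Fin k,
          (if (i : ℕ) < k - r then
            ((NX V ((fun w => b i + w) ''
                  (Submodule.span (ZMod 2)
                    (b '' {j : Fin k | (j : ℕ) < k - r ∧ j ≠ i}) :
                    Set (Fin k → ZMod 2))) : ℝ)
              + (1 / 2) *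
                (NX V {c | c ∉ Submodule.span (ZMod 2)
                    (b '' {j : Fin k | (j : ℕ) < k - r})} : ℝ))
              * Mc A U V (b i)
          else 0) := by
  exact ErrR_le_bnd A U V nn hnn r (k - r) (by omega) b (hb.linearIndepOn _)

end
end

section
/- With the setup below, for every family b_1, …, b_k of linearly independent vectors in GF(2)^k: Err(b_1,…,b_k) ≤ OPT_k + Σ_{i=1}^k M_{b_i} · N_{b_i + span^{\i}(b_1,…,b_k)}, as an inequality between real numbers. -/
/-!
Write the column `c_j` of `V` in the basis `b` as `c_j = ∑ i, x i • b i` and use the same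
coefficients on the nearest-neighbor columns `a_{nn(U b_i)}`. By the triangle inequality the
resulting error in column `j` is at most the optimal error `hammingDist a_j (U c_j)` plus the sum
of `hammingDist (U b_i) a_{nn(U b_i)}` over those `i` with `x i = 1`. For such an `i` the vector
`c_j` lies in the coset `b_i + span^{\i}`, and the nearest neighbor of `U b_i` is at distance at
most the average distance `M_{b_i}` (`hammingDist_nn_le_Mc`). Summing over `j` the first terms
give `OPT_k` (`diffCount_mul_eq_sum`), and the others are counted by `N` (`NX_eq_sum`).
-/

open Matrix Finset
open scoped Classical

noncomputable section

lemma hammingDist_sum_le_s3 {d k : ℕ} (f g : Fin k → Fin d → ZMod 2) :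
    hammingDist (∑ i, f i) (∑ i, g i) ≤ ∑ i, hammingDist (f i) (g i) := by
  unfold hammingDist
  refine le_trans (Finset.card_le_card ?_) Finset.card_biUnion_le
  intro t ht
  simp only [Finset.mem_filter, Finset.mem_univ, true_and, Finset.mem_biUnion,
    Finset.sum_apply] at ht ⊢
  by_contra! h
  exact ht (Finset.sum_congr rfl fun i _ => h i)

lemma diffCount_mul_eq_sum {d n k : ℕ} (A : Matrix (Fin d) (Fin n) (ZMod 2))
    (U : Matrix (Fin d) (Fin k) (ZMod 2)) (V : Matrix (Fin k) (Fin n) (ZMod 2)) :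
    diffCount A (U * V) = ∑ j, hammingDist (colA A j) (U.mulVec fun i => V i j) := by
  simp only [diffCount, hammingDist, Finset.card_filter, Fintype.sum_prod_type_right]
  rfl

lemma NX_eq_sum {n k : ℕ} (V : Matrix (Fin k) (Fin n) (ZMod 2)) (X : Set (Fin k → ZMod 2)) :
    NX V X = ∑ j : Fin n, if (fun i => V i j) ∈ X then 1 else 0 := by
  have h : ∀ c : Fin k → ZMod 2, (if c ∈ X then nC V c else 0) =
      ∑ j : Fin n, if (fun i => V i j) = c then (if c ∈ X then 1 else 0) else 0 := by
    intro c
    split_ifs <;> simp [nC, Jc]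
  simp only [NX, h]
  rw [Finset.sum_comm]
  simp

/-- The nearest column is at most as far from `U c` as the average column of `J_c`; when `J_c` is
empty, the bound is the trivial one by the dimension `d`. -/
lemma hammingDist_nn_le_Mc {d n k : ℕ} (A : Matrix (Fin d) (Fin n) (ZMod 2))
    (U : Matrix (Fin d) (Fin k) (ZMod 2)) (V : Matrix (Fin k) (Fin n) (ZMod 2))
    (nn : (Fin d → ZMod 2) → Fin n)
    (hnn : ∀ (u : Fin d → ZMod 2) (j : Fin n),
      hammingDist (colA A (nn u)) u ≤ hammingDist (colA A j) u) (c : Fin k → ZMod 2) :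
    (hammingDist (U.mulVec c) (colA A (nn (U.mulVec c))) : ℝ) ≤ Mc A U V c := by
  rw [hammingDist_comm]
  unfold Mc
  split_ifs with h
  · rw [le_div_iff₀ (by exact_mod_cast h)]
    have : (Jc V c).card • hammingDist (colA A (nn (U.mulVec c))) (U.mulVec c) ≤ Lc A U V c :=
      Finset.card_nsmul_le_sum _ _ _ fun j _ => hnn _ j
    rw [smul_eq_mul, mul_comm] at this
    exact_mod_cast this
  · exact_mod_cast (hammingDist_le_card_fintype).trans (by simp)

lemma mem_coset_of_coeff_ne_zero {k : ℕ} (b : Fin k → Fin k → ZMod 2) (x : Fin k → ZMod 2)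
    (i : Fin k) (hx : x i ≠ 0) :
    ∑ l, x l • b l ∈ (fun w => b i + w) ''
      (Submodule.span (ZMod 2) (b '' {j : Fin k | j ≠ i}) : Set (Fin k → ZMod 2)) := by
  have h1 : x i = 1 := Fin.eq_one_of_ne_zero _ hx
  refine ⟨∑ l ∈ Finset.univ.erase i, x l • b l, ?_, ?_⟩
  · refine Submodule.sum_mem _ fun l hl => Submodule.smul_mem _ _ (Submodule.subset_span ?_)
    exact ⟨l, Finset.ne_of_mem_erase hl, rfl⟩
  · rw [← Finset.add_sum_erase _ _ (Finset.mem_univ i), h1, one_smul]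

/-- The error in approximating a single vector `a`: the coefficients of `c` in the basis `b` witness
the bound on the minimum. -/
lemma column_bound {d n k : ℕ} (A : Matrix (Fin d) (Fin n) (ZMod 2))
    (U : Matrix (Fin d) (Fin k) (ZMod 2)) (V : Matrix (Fin k) (Fin n) (ZMod 2))
    (nn : (Fin d → ZMod 2) → Fin n)
    (hnn : ∀ (u : Fin d → ZMod 2) (j : Fin n),
      hammingDist (colA A (nn u)) u ≤ hammingDist (colA A j) u)
    (b : Fin k → (Fin k → ZMod 2)) (hb : LinearIndependent (ZMod 2) b)
    (a : Fin d → ZMod 2) (c : Fin k → ZMod 2) :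
    ((⨅ x : Fin k → ZMod 2,
      hammingDist a (∑ i : Fin k, x i • colA A (nn (U.mulVec (b i)))) : ℕ) : ℝ) ≤
      hammingDist a (U.mulVec c) + ∑ i : Fin k, Mc A U V (b i) *
        (if c ∈ (fun w => b i + w) '' (Submodule.span (ZMod 2) (b '' {j : Fin k | j ≠ i}) :
              Set (Fin k → ZMod 2)) then 1 else 0) := by
  obtain ⟨x, rfl⟩ : ∃ x : Fin k → ZMod 2, ∑ i, x i • b i = c := by
    have : c ∈ Submodule.span (ZMod 2) (Set.range b) := by
      rw [hb.span_eq_top_of_card_eq_finrank' (by simp)]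
      trivial
    exact (Submodule.mem_span_range_iff_exists_fun _).1 this
  have hU : U.mulVec (∑ i, x i • b i) = ∑ i, x i • U.mulVec (b i) := by
    rw [Matrix.mulVec_sum]
    simp only [Matrix.mulVec_smul]
  have h1 : (⨅ x : Fin k → ZMod 2,
      hammingDist a (∑ i : Fin k, x i • colA A (nn (U.mulVec (b i)))) : ℕ) ≤
      hammingDist a (U.mulVec (∑ i, x i • b i)) +
        ∑ i, hammingDist (x i • U.mulVec (b i)) (x i • colA A (nn (U.mulVec (b i)))) := by
    refine (ciInf_le (OrderBot.bddBelow _) x).trans ((hammingDist_triangle _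
      (U.mulVec (∑ i, x i • b i)) _).trans (Nat.add_le_add_left ?_ _))
    rw [hU]
    exact hammingDist_sum_le_s3 _ _
  refine (Nat.cast_le.2 h1).trans ?_
  push_cast
  gcongr with i
  have hM := hammingDist_nn_le_Mc A U V nn hnn (b i)
  by_cases hx : x i = 0
  · simp only [hx, zero_smul, hammingDist_self, Nat.cast_zero]
    refine mul_nonneg (le_trans (Nat.cast_nonneg _) hM) ?_
    split_ifs <;> norm_num
  · rw [if_pos (mem_coset_of_coeff_ne_zero b x i hx), mul_one,
      show x i = 1 from Fin.eq_one_of_ne_zero _ hx, one_smul, one_smul]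
    exact hM

/-- Base case `r = 0` of the additive bounds:
`Err(b_1,…,b_k) ≤ OPT_k + Σ_{i=1}^k M_{b_i} · N_{b_i + span^{\i}(b_1,…,b_k)}`. -/
theorem base_additive_bound (d n k : ℕ) (hk : 1 ≤ k)
    (A : Matrix (Fin d) (Fin n) (ZMod 2))
    (U : Matrix (Fin d) (Fin k) (ZMod 2)) (V : Matrix (Fin k) (Fin n) (ZMod 2))
    (hopt : ∀ (U' : Matrix (Fin d) (Fin k) (ZMod 2))
      (V' : Matrix (Fin k) (Fin n) (ZMod 2)),
      diffCount A (U * V) ≤ diffCount A (U' * V'))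
    (nn : (Fin d → ZMod 2) → Fin n)
    (hnn : ∀ (u : Fin d → ZMod 2) (j : Fin n),
      hammingDist (colA A (nn u)) u ≤ hammingDist (colA A j) u)
    (b : Fin k → (Fin k → ZMod 2)) (hb : LinearIndependent (ZMod 2) b) :
    (Err A U nn b : ℝ) ≤
      (diffCount A (U * V) : ℝ)
      + ∑ i : Fin k, Mc A U V (b i) *
          (NX V ((fun w => b i + w) ''
            (Submodule.span (ZMod 2) (b '' {j : Fin k | j ≠ i}) :
              Set (Fin k → ZMod 2))) : ℝ) := by
  have h := Finset.sum_le_sum fun (j : Fin n) (_ : j ∈ Finset.univ) =>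
    column_bound A U V nn hnn b hb (colA A j) (fun i => V i j)
  rw [Finset.sum_add_distrib, Finset.sum_comm] at h
  simp only [Err, diffCount_mul_eq_sum, NX_eq_sum]
  push_cast
  simpa only [Finset.mul_sum] using h

end
end

section
/- Let A_1,…,A_n ⊆ Fin d, U_1,…,U_k ⊆ Fin d, V_1,…,V_n ⊆ Fin k be as below. Let S_1,…,S_{2^k−1} be an enumeration of all nonempty subsets of Fin k such that n_{S_1} ≤ n_{S_2} ≤ … ≤ n_{S_{2^k−1}}. Let D assign to each nonempty S ⊆ Fin k a set D_S that is a column of A nearest to U_S, i.e., D_S = A_{j_S} for some index j_S with |D_S △ U_S| ≤ |A_j △ U_S| for all j. Define, for i ∈ Fin k and ℓ ∈ [2^k−1], E^ℓ_i := ⋂_{ℓ' ≥ ℓ with i ∈ S_{ℓ'}} D_{S_{ℓ'}}; for ℓ₁ < ℓ₂ with i ∈ S_{ℓ₁} ∩ S_{ℓ₂}, F_i^{ℓ₁,ℓ₂} := E_i^{ℓ₁+1} \ (⋃_{i' ∈ S_{ℓ₂}} E^{ℓ₁}_{i'}); and B_i := E_i^1 ∪ ⋃_{ℓ₁ < ℓ₂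 with i ∈ S_{ℓ₁} ∩ S_{ℓ₂}} F_i^{ℓ₁,ℓ₂}. Then Σ_{j=1}^n |A_j △ (⋃_{i ∈ V_j} B_i)| ≤ 2^k · Σ_{j=1}^n |A_j △ U_{V_j}|. (This is the 2^k approximation-ratio guarantee of Generalized Column Subset Selection over the Boolean semiring.) -/
/-!
By the triangle inequality through `U_{V_j}` and the choice of `D_T` as a nearest column, it
suffices to show `∑_ℓ n_{S_ℓ} |U_{S_ℓ} ∆ B_{S_ℓ}| ≤ (2^k - 1) ∑_ℓ n_{S_ℓ} |D_{S_ℓ} ∆ U_{S_ℓ}|`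
(the empty set contributes no error, and the missing `1` comes from the triangle inequality).

This is proved separately for each row `x`. Call `ℓ` bad if `D_{S_ℓ}` and `U_{S_ℓ}` differ at `x`.
The combinatorial core (`mem_B_iff`) is that `B` agrees with `U` at `x` beyond the last bad index,
so every `ℓ` at which they disagree has a bad index `m ≥ ℓ`. The enumeration being sorted,
`n_{S_ℓ} ≤ n_{S_m}`, so each of the `2^k - 1` terms on the left is at most the whole sum on the
right (`sum_le_of_dominated`).
-/

open Finset
open scoped symmDiff

/-- Boolean "product" of basis sets: `U_S = ⋃_{i ∈ S} U_i`. -/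
def US {d k : ℕ} (U : Fin k → Finset (Fin d)) (S : Finset (Fin k)) : Finset (Fin d) :=
  S.biUnion U

/-- `n_S`: the number of coefficient sets equal to `S`. -/
def nS {n k : ℕ} (V : Fin n → Finset (Fin k)) (S : Finset (Fin k)) : ℕ :=
  (Finset.univ.filter fun j => V j = S).card

/-- `E^ℓ_i := ⋂_{ℓ' ≥ ℓ, i ∈ S_{ℓ'}} D_{S_{ℓ'}}` (with `ℓ` ranging over `ℕ`, the
enumeration being 0-indexed). -/
def Eset {d k : ℕ} (S : Fin (2 ^ k - 1) → Finset (Fin k))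
    (D : Finset (Fin k) → Finset (Fin d)) (i : Fin k) (m : ℕ) : Finset (Fin d) :=
  (Finset.univ.filter fun ℓ' : Fin (2 ^ k - 1) => m ≤ (ℓ' : ℕ) ∧ i ∈ S ℓ').inf
    fun ℓ' => D (S ℓ')

/-- `F_i^{ℓ₁,ℓ₂} := E_i^{ℓ₁+1} \ ⋃_{i' ∈ S_{ℓ₂}} E^{ℓ₁}_{i'}`. -/
def Fset {d k : ℕ} (S : Fin (2 ^ k - 1) → Finset (Fin k))
    (D : Finset (Fin k) → Finset (Fin d)) (i : Fin k)
    (ℓ₁ ℓ₂ : Fin (2 ^ k - 1)) : Finset (Fin d) :=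
  Eset S D i ((ℓ₁ : ℕ) + 1) \ (S ℓ₂).biUnion fun i' => Eset S D i' (ℓ₁ : ℕ)

/-- `B_i := E_i^1 ∪ ⋃_{ℓ₁ < ℓ₂, i ∈ S_{ℓ₁} ∩ S_{ℓ₂}} F_i^{ℓ₁,ℓ₂}`. -/
def Bset {d k : ℕ} (S : Fin (2 ^ k - 1) → Finset (Fin k))
    (D : Finset (Fin k) → Finset (Fin d)) (i : Fin k) : Finset (Fin d) :=
  Eset S D i 0 ∪
    (Finset.univ.filter fun p : Fin (2 ^ k - 1) × Fin (2 ^ k - 1) =>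
        p.1 < p.2 ∧ i ∈ S p.1 ∧ i ∈ S p.2).biUnion
      fun p => Fset S D i p.1 p.2

theorem mem_Eset {d k : ℕ} (S : Fin (2 ^ k - 1) → Finset (Fin k))
    (D : Finset (Fin k) → Finset (Fin d)) (i : Fin k) (m : ℕ) (x : Fin d) :
    x ∈ Eset S D i m ↔ ∀ ℓ : Fin (2 ^ k - 1), m ≤ (ℓ : ℕ) → i ∈ S ℓ → x ∈ D (S ℓ) := by
  unfold Eset
  rw [← Finset.singleton_subset_iff, Finset.le_inf_iff]
  simp

theorem mem_Bset {d k : ℕ} (S : Fin (2 ^ k - 1) → Finset (Fin k))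
    (D : Finset (Fin k) → Finset (Fin d)) (i : Fin k) (x : Fin d) :
    x ∈ Bset S D i ↔ x ∈ Eset S D i 0 ∨ ∃ a b : Fin (2 ^ k - 1), a < b ∧ i ∈ S a ∧ i ∈ S b ∧
      x ∈ Eset S D i ((a : ℕ) + 1) ∧ ∀ i' ∈ S b, x ∉ Eset S D i' (a : ℕ) := by
  simp [Bset, Fset, and_assoc]

/-- If `x ∉ E_i^0`, then there is a last index with `i ∈ S_ℓ` and
`x ∉ D_{S_ℓ}`; it is the threshold beyond which `x ∈ E_i^ℓ`. -/
theorem exists_threshold {d k : ℕ} (S : Fin (2 ^ k - 1) → Finset (Fin k))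
    (D : Finset (Fin k) → Finset (Fin d)) (i : Fin k) (x : Fin d) (h : x ∉ Eset S D i 0) :
    ∃ a : Fin (2 ^ k - 1), i ∈ S a ∧ x ∉ D (S a) ∧ x ∈ Eset S D i ((a : ℕ) + 1) := by
  have hne : (univ.filter fun ℓ => i ∈ S ℓ ∧ x ∉ D (S ℓ)).Nonempty := by
    rw [mem_Eset] at h
    push Not at h
    obtain ⟨ℓ, -, h1, h2⟩ := h
    exact ⟨ℓ, by simp [h1, h2]⟩
  obtain ⟨a, ha, hmax⟩ := Finset.exists_max_image _ id hne
  simp only [mem_filter, mem_univ, true_and, id] at ha hmax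
  refine ⟨a, ha.1, ha.2, ?_⟩
  rw [mem_Eset]
  intro ℓ hℓ hi
  by_contra hx
  have := Fin.le_def.1 (hmax ℓ ⟨hi, hx⟩)
  omega

/-- If `D` agrees with `U` at `x` from index `p` on, then so does `B`. -/
theorem mem_B_iff {d k : ℕ} (U : Fin k → Finset (Fin d)) (S : Fin (2 ^ k - 1) → Finset (Fin k))
    (D : Finset (Fin k) → Finset (Fin d)) (x : Fin d) (p : ℕ)
    (hp : ∀ ℓ : Fin (2 ^ k - 1), p ≤ (ℓ : ℕ) → (x ∈ D (S ℓ) ↔ x ∈ US U (S ℓ)))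
    (ℓ : Fin (2 ^ k - 1)) (hℓ : p ≤ (ℓ : ℕ)) :
    x ∈ (S ℓ).biUnion (Bset S D) ↔ x ∈ US U (S ℓ) := by
  have hE : ∀ i, x ∈ U i → ∀ q, p ≤ q → x ∈ Eset S D i q := by
    intro i hi q hq
    rw [mem_Eset]
    intro ℓ' h1 h2
    rw [hp ℓ' (hq.trans h1)]
    exact mem_biUnion.2 ⟨i, h2, hi⟩
  constructor
  · intro h
    obtain ⟨i, hi, hB⟩ := mem_biUnion.1 h
    rw [mem_Bset] at hB
    rcases hB with h0 | ⟨a, b, hab, hia, hib, hxE, hxn⟩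
    · exact (hp ℓ hℓ).1 ((mem_Eset S D i 0 x).1 h0 ℓ (Nat.zero_le _) hi)
    · rcases Nat.lt_or_ge (a : ℕ) (ℓ : ℕ) with hlt | hge
      · exact (hp ℓ hℓ).1 ((mem_Eset S D i _ x).1 hxE ℓ hlt hi)
      · -- Here `x ∈ D_{S_b} = U_{S_b}` at `x`, so some `i' ∈ S_b` has `x ∈ U_{i'} ⊆ E_{i'}^a`.
        exfalso
        have hb : x ∈ D (S b) := (mem_Eset S D i _ x).1 hxE b hab hib
        rw [hp b (by have := Fin.lt_def.1 hab; omega)] at hb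
        obtain ⟨i', hi', hx'⟩ := mem_biUnion.1 hb
        exact hxn i' hi' (hE i' hx' a (hℓ.trans hge))
  · intro h
    obtain ⟨i₀, hi₀, hx₀⟩ := mem_biUnion.1 h
    by_cases h0 : ∃ i ∈ S ℓ, x ∈ Eset S D i 0
    · obtain ⟨i, hi, hx⟩ := h0
      exact mem_biUnion.2 ⟨i, hi, (mem_Bset S D i x).2 (Or.inl hx)⟩
    · push Not at h0
      -- The element of `S_ℓ` with the smallest threshold `a` has `x ∈ F_i^{a,ℓ}`.
      have : Nonempty (Fin (2 ^ k - 1)) := ⟨ℓ⟩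
      choose! t ht1 ht2 ht3 using fun i hi => exists_threshold S D i x (h0 i hi)
      obtain ⟨i, hi, hmin⟩ := Finset.exists_min_image (S ℓ) t ⟨i₀, hi₀⟩
      have hlt : (t i₀ : ℕ) < p := by
        by_contra hc
        exact ht2 i₀ hi₀ ((mem_Eset S D i₀ p x).1 (hE i₀ hx₀ p le_rfl) _ (not_lt.1 hc)
          (ht1 i₀ hi₀))
      have h2 := Fin.le_def.1 (hmin i₀ hi₀)
      refine mem_biUnion.2 ⟨i, hi, (mem_Bset S D i x).2 (Or.inr ⟨t i, ℓ, ?_, ht1 i hi, hi,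
        ht3 i hi, ?_⟩)⟩
      · rw [Fin.lt_def]; omega
      · intro i' hi' hx'
        exact ht2 i' hi' ((mem_Eset S D i' _ x).1 hx' _ (Fin.le_def.1 (hmin i' hi')) (ht1 i' hi'))

/-- A sorted family of weights: if every index charged on the left (`P`) is dominated by an index
charged on the right (`Q`), then the left sum is at most `N` times the right one. -/
theorem sum_le_of_dominated {N : ℕ} (w : Fin N → ℕ) (hw : ∀ a b, a ≤ b → w a ≤ w b)
    (P Q : Fin N → Prop) [DecidablePred P] [DecidablePred Q]
    (h : ∀ a, P a → ∃ b, a ≤ b ∧ Q b) :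
    ∑ a, w a * (if P a then 1 else 0) ≤ N * ∑ a, w a * (if Q a then 1 else 0) := by
  have key : ∀ a ∈ (univ : Finset (Fin N)),
      w a * (if P a then 1 else 0) ≤ ∑ b, w b * (if Q b then 1 else 0) := by
    intro a _
    split_ifs with ha
    · obtain ⟨b, hab, hb⟩ := h a ha
      calc w a * 1 ≤ w b * (if Q b then 1 else 0) := by simpa [hb] using hw a b hab
        _ ≤ _ := Finset.single_le_sum (f := fun b => w b * (if Q b then 1 else 0))
          (fun _ _ => Nat.zero_le _) (mem_univ b)
    · simp
  simpa using Finset.sum_le_card_nsmul _ _ _ key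

/-- Grouping the columns by their coefficient set. -/
theorem sum_comp_V {n k : ℕ} (V : Fin n → Finset (Fin k))
    (S : Fin (2 ^ k - 1) → Finset (Fin k)) (hSinj : Function.Injective S)
    (hSne : ∀ ℓ, (S ℓ).Nonempty)
    (hSsurj : ∀ T : Finset (Fin k), T.Nonempty → ∃ ℓ, S ℓ = T)
    (f : Finset (Fin k) → ℕ) (hf : f ∅ = 0) :
    ∑ j, f (V j) = ∑ ℓ, nS V (S ℓ) * f (S ℓ) := by
  have h1 : ∀ ℓ, nS V (S ℓ) * f (S ℓ) = ∑ j, if V j = S ℓ then f (S ℓ) else 0 := by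
    intro ℓ
    simp [nS, ← Finset.sum_filter]
  simp only [h1]
  rw [Finset.sum_comm]
  refine Finset.sum_congr rfl fun j _ => ?_
  rcases (V j).eq_empty_or_nonempty with h | h
  · rw [h, hf, Finset.sum_eq_zero]
    intro ℓ _
    rw [if_neg]
    exact (hSne ℓ).ne_empty.symm
  · obtain ⟨ℓ, hℓ⟩ := hSsurj _ h
    rw [← hℓ, Finset.sum_eq_single ℓ]
    · simp
    · intro b _ hb
      rw [if_neg]
      exact fun e => hb (hSinj e).symm
    · simp

theorem card_eq_sum_mem {d : ℕ} (X : Finset (Fin d)) :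
    X.card = ∑ x, if x ∈ X then 1 else 0 := by
  simp

theorem weighted_card {d N : ℕ} (w : Fin N → ℕ) (X : Fin N → Finset (Fin d)) :
    ∑ ℓ, w ℓ * (X ℓ).card = ∑ x, ∑ ℓ, w ℓ * (if x ∈ X ℓ then 1 else 0) := by
  rw [Finset.sum_comm]
  refine Finset.sum_congr rfl fun ℓ _ => ?_
  rw [card_eq_sum_mem, Finset.mul_sum]

/-- The weighted error of `B` against `U` is at most `2^k - 1` times that of `D` against `U`. -/
theorem weighted_error_le {d n k : ℕ} (U : Fin k → Finset (Fin d)) (V : Fin n → Finset (Fin k))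
    (S : Fin (2 ^ k - 1) → Finset (Fin k))
    (hSsort : ∀ ℓ ℓ' : Fin (2 ^ k - 1), ℓ ≤ ℓ' → nS V (S ℓ) ≤ nS V (S ℓ'))
    (D : Finset (Fin k) → Finset (Fin d)) :
    ∑ ℓ, nS V (S ℓ) * (US U (S ℓ) ∆ (S ℓ).biUnion (Bset S D)).card ≤
      (2 ^ k - 1) * ∑ ℓ, nS V (S ℓ) * (D (S ℓ) ∆ US U (S ℓ)).card := by
  rw [weighted_card, weighted_card, Finset.mul_sum]
  refine Finset.sum_le_sum fun x _ => ?_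
  refine sum_le_of_dominated (fun ℓ => nS V (S ℓ)) hSsort
    (fun ℓ => x ∈ US U (S ℓ) ∆ (S ℓ).biUnion (Bset S D))
    (fun ℓ => x ∈ D (S ℓ) ∆ US U (S ℓ)) ?_
  intro a ha
  by_contra hc
  push Not at hc
  have := mem_B_iff U S D x a (fun ℓ hℓ => by
    have := hc ℓ (Fin.le_def.2 hℓ)
    rw [Finset.mem_symmDiff] at this
    tauto) a le_rfl
  rw [Finset.mem_symmDiff] at ha
  tauto

theorem card_symmDiff_triangle {d : ℕ} (X Y Z : Finset (Fin d)) :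
    (X ∆ Z).card ≤ (X ∆ Y).card + (Y ∆ Z).card :=
  (Finset.card_le_card (symmDiff_triangle X Y Z)).trans (Finset.card_union_le _ _)

/-- Generalized Column Subset Selection over the Boolean semiring has approximation
ratio `2^k`. -/
theorem gcss_ratio (d n k : ℕ)
    (A : Fin n → Finset (Fin d)) (U : Fin k → Finset (Fin d))
    (V : Fin n → Finset (Fin k))
    (S : Fin (2 ^ k - 1) → Finset (Fin k))
    (hSinj : Function.Injective S)
    (hSne : ∀ ℓ, (S ℓ).Nonempty)
    (hSsurj : ∀ T : Finset (Fin k), T.Nonempty → ∃ ℓ, S ℓ = T)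
    (hSsort : ∀ ℓ ℓ' : Fin (2 ^ k - 1), ℓ ≤ ℓ' → nS V (S ℓ) ≤ nS V (S ℓ'))
    (D : Finset (Fin k) → Finset (Fin d))
    (hD : ∀ T : Finset (Fin k), T.Nonempty →
      ∃ jT : Fin n, D T = A jT ∧
        ∀ j : Fin n, (D T ∆ US U T).card ≤ (A j ∆ US U T).card) :
    ∑ j : Fin n, (A j ∆ (V j).biUnion (Bset S D)).card ≤
      2 ^ k * ∑ j : Fin n, (A j ∆ US U (V j)).card := by
  have h1 : ∑ j, (A j ∆ (V j).biUnion (Bset S D)).card ≤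
      ∑ j, (A j ∆ US U (V j)).card + ∑ j, (US U (V j) ∆ (V j).biUnion (Bset S D)).card := by
    rw [← Finset.sum_add_distrib]
    exact Finset.sum_le_sum fun j _ => card_symmDiff_triangle _ _ _
  have h2 := sum_comp_V V S hSinj hSne hSsurj
    (fun T => (US U T ∆ T.biUnion (Bset S D)).card) (by simp [US])
  have h3 := weighted_error_le U V S hSsort D
  -- `hD` says nothing about `D ∅`, so the error of `D` is set to `0` there.
  have h4 := sum_comp_V V S hSinj hSne hSsurj
    (fun T => if T = ∅ then 0 else (D T ∆ US U T).card) (by simp)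
  simp only [(hSne _).ne_empty, if_false] at h4
  have h5 : (∑ j, if V j = ∅ then 0 else (D (V j) ∆ US U (V j)).card) ≤
      ∑ j, (A j ∆ US U (V j)).card := by
    refine Finset.sum_le_sum fun j _ => ?_
    split_ifs with h
    · exact Nat.zero_le _
    · obtain ⟨_, -, hmin⟩ := hD (V j) (Finset.nonempty_iff_ne_empty.2 h)
      exact hmin j
  have h6 := Nat.mul_le_mul_left (2 ^ k - 1) (h4 ▸ h5)
  have h7 : 2 ^ k * ∑ j, (A j ∆ US U (V j)).card =
      ∑ j, (A j ∆ US U (V j)).card + (2 ^ k - 1) * ∑ j, (A j ∆ US U (V j)).card := by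
    obtain ⟨c, hc⟩ : ∃ c, 2 ^ k = 1 + c := ⟨2 ^ k - 1, by have := Nat.one_le_two_pow (n := k); omega⟩
    have hc' : 2 ^ k - 1 = c := by omega
    rw [hc', hc]
    ring
  rw [h7]
  rw [h2] at h1
  exact h1.trans (Nat.add_le_add_left (h3.trans h6) _)
end

section
/- Let S_1,…,S_{2^k−1} be an enumeration of all nonempty subsets of Fin k, let U_1,…,U_k ⊆ Fin d with U_S := ⋃_{i∈S} U_i, let D assign to each nonempty S ⊆ Fin k a set D_S ⊆ Fin d, and define E^ℓ_i := ⋂_{ℓ' ≥ ℓ with i ∈ S_{ℓ'}} D_{S_{ℓ'}} for i ∈ Fin k, ℓ ∈ [2^k−1]. Fix ℓ ∈ [2^k−1] and suppose B_1,…,B_k ⊆ Fin d and R_ℓ ⊆ Fin d satisfy ⋃_{i ∈ S_ℓ} B_i = (⋃_{i ∈ S_ℓ} E^ℓ_i) ∪ R_ℓ. Then U_{S_ℓ} △ (⋃_{i ∈ S_ℓ} B_i) ⊆ (⋃_{ℓ' ≥ ℓ with S_ℓ ∩ S_{ℓ'} ≠ ∅} (U_{S_{ℓ'}} △ D_{S_{ℓ'}}))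 ∪ R_ℓ, where △ denotes symmetric difference of finite sets. -/
/-!
Let `x ∉ R` lie in the symmetric difference. If `x ∈ U_i` with `i ∈ S_ℓ` but `x ∉ ⋃ B`, then
`x ∉ E^ℓ_i`, so some `ℓ' ≥ ℓ` with `i ∈ S_ℓ'` has `x ∉ D_{S_ℓ'}`, while `x ∈ U_i ⊆ U_{S_ℓ'}`;
here `i` witnesses that `S_ℓ` and `S_ℓ'` meet. If instead `x ∈ ⋃ B` but `x ∉ U_{S_ℓ}`, then
`x ∈ E^ℓ_i ⊆ D_{S_ℓ}` for some `i ∈ S_ℓ`, and the index `ℓ` itself works.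
-/

open Finset
open scoped symmDiff

theorem mem_Eset_iff {d k : ℕ} (S : Fin (2 ^ k - 1) → Finset (Fin k))
    (D : Finset (Fin k) → Finset (Fin d)) (i : Fin k) (ℓ : Fin (2 ^ k - 1)) (x : Fin d) :
    x ∈ Eset S D i (ℓ : ℕ) ↔ ∀ ℓ', ℓ ≤ ℓ' → i ∈ S ℓ' → x ∈ D (S ℓ') := by
  simp [Eset, Finset.mem_inf]

/-- If `⋃_{i ∈ S_ℓ} B_i = (⋃_{i ∈ S_ℓ} E^ℓ_i) ∪ R_ℓ`, then
`U_{S_ℓ} △ ⋃_{i ∈ S_ℓ} B_i ⊆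
  (⋃_{ℓ' ≥ ℓ, S_ℓ ∩ S_{ℓ'} ≠ ∅} (U_{S_{ℓ'}} △ D_{S_{ℓ'}})) ∪ R_ℓ`. -/
theorem decomposition_lemma (d k : ℕ)
    (U : Fin k → Finset (Fin d))
    (S : Fin (2 ^ k - 1) → Finset (Fin k))
    (hSinj : Function.Injective S)
    (hSne : ∀ ℓ, (S ℓ).Nonempty)
    (hSsurj : ∀ T : Finset (Fin k), T.Nonempty → ∃ ℓ, S ℓ = T)
    (D : Finset (Fin k) → Finset (Fin d))
    (ℓ : Fin (2 ^ k - 1))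
    (B : Fin k → Finset (Fin d)) (R : Finset (Fin d))
    (hEq : (S ℓ).biUnion B = ((S ℓ).biUnion fun i => Eset S D i (ℓ : ℕ)) ∪ R) :
    US U (S ℓ) ∆ (S ℓ).biUnion B ⊆
      ((Finset.univ.filter fun ℓ' : Fin (2 ^ k - 1) =>
          ℓ ≤ ℓ' ∧ (S ℓ ∩ S ℓ').Nonempty).biUnion
        fun ℓ' => US U (S ℓ') ∆ D (S ℓ')) ∪ R := by
  intro x hx
  rw [mem_union]
  by_cases hR : x ∈ R
  · exact Or.inr hR
  left
  rw [hEq, mem_symmDiff] at hx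
  simp only [mem_biUnion, mem_filter, mem_univ, true_and]
  rcases hx with ⟨hxU, hxB⟩ | ⟨hxB, hxU⟩
  · obtain ⟨i, hi, hxi⟩ := mem_biUnion.1 hxU
    have hE : x ∉ Eset S D i (ℓ : ℕ) := fun h =>
      hxB (mem_union_left _ (mem_biUnion.2 ⟨i, hi, h⟩))
    rw [mem_Eset_iff] at hE
    push Not at hE
    obtain ⟨m, hm, him, hxD⟩ := hE
    exact ⟨m, ⟨hm, i, mem_inter.2 ⟨hi, him⟩⟩,
      mem_symmDiff.2 (Or.inl ⟨mem_biUnion.2 ⟨i, him, hxi⟩, hxD⟩)⟩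
  · obtain ⟨i, hi, hxi⟩ := mem_biUnion.1 ((mem_union.1 hxB).resolve_right hR)
    -- `S ℓ` is itself one of the sets indexing the intersection `E^ℓ_i`, so the index `ℓ` works.
    exact ⟨ℓ, ⟨le_rfl, i, mem_inter.2 ⟨hi, hi⟩⟩,
      mem_symmDiff.2 (Or.inr ⟨(mem_Eset_iff S D i ℓ x).1 hxi ℓ le_rfl hi, hxU⟩)⟩
end

section
/- Let S_1,…,S_{2^k−1} be an enumeration of all nonempty subsets of Fin k, let U_1,…,U_k ⊆ Fin d with U_S := ⋃_{i∈S} U_i, let D assign to each nonempty S ⊆ Fin k a set D_S ⊆ Fin d, and define E^ℓ_i := ⋂_{ℓ' ≥ ℓ with i ∈ S_{ℓ'}} D_{S_{ℓ'}} and, for ℓ₁ < ℓ₂ with i ∈ S_{ℓ₁} ∩ S_{ℓ₂}, F_i^{ℓ₁,ℓ₂} := E_i^{ℓ₁+1} \ (⋃_{i' ∈ S_{ℓ₂}} E^{ℓ₁}_{i'}). Then for every ℓ₁ < ℓ₂ and every i ∈ S_{ℓ₁} ∩ S_{ℓ₂}: F^{ℓ₁,ℓ₂}_i ⊆ (D_{S_{ℓ₂}}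 \ U_{S_{ℓ₂}}) ∪ ⋃_{i' ∈ S_{ℓ₂}} ⋃_{ℓ' ≥ ℓ₁ with i' ∈ S_{ℓ'}} (U_{S_{ℓ'}} \ D_{S_{ℓ'}}). -/
/-!
Let `x ∈ F_i^{ℓ₁,ℓ₂}`. Since `ℓ₂ ≥ ℓ₁ + 1` and `i ∈ S_{ℓ₂}`, membership in `E_i^{ℓ₁+1}` gives
`x ∈ D_{S_{ℓ₂}}`. If `x ∉ U_{S_{ℓ₂}}`, then `x` lies in the first set of the union. Otherwise
`x ∈ U_{i'}` for some `i' ∈ S_{ℓ₂}`, and `x ∉ E^{ℓ₁}_{i'}` gives `ℓ' ≥ ℓ₁` with `i' ∈ S_{ℓ'}` and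
`x ∉ D_{S_{ℓ'}}`; as `U_{i'} ⊆ U_{S_{ℓ'}}`, the point `x` lies in `U_{S_{ℓ'}} \ D_{S_{ℓ'}}`.
-/

open Finset

/-- For `ℓ₁ < ℓ₂` and `i ∈ S_{ℓ₁} ∩ S_{ℓ₂}`:
`F^{ℓ₁,ℓ₂}_i ⊆ (D_{S_{ℓ₂}} \ U_{S_{ℓ₂}}) ∪
  ⋃_{i' ∈ S_{ℓ₂}} ⋃_{ℓ' ≥ ℓ₁, i' ∈ S_{ℓ'}} (U_{S_{ℓ'}} \ D_{S_{ℓ'}})`. -/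
theorem F_subset (d k : ℕ)
    (U : Fin k → Finset (Fin d))
    (S : Fin (2 ^ k - 1) → Finset (Fin k))
    (hSinj : Function.Injective S)
    (hSne : ∀ ℓ, (S ℓ).Nonempty)
    (hSsurj : ∀ T : Finset (Fin k), T.Nonempty → ∃ ℓ, S ℓ = T)
    (D : Finset (Fin k) → Finset (Fin d))
    (ℓ₁ ℓ₂ : Fin (2 ^ k - 1)) (hlt : ℓ₁ < ℓ₂)
    (i : Fin k) (hi₁ : i ∈ S ℓ₁) (hi₂ : i ∈ S ℓ₂) :
    Fset S D i ℓ₁ ℓ₂ ⊆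
      (D (S ℓ₂) \ US U (S ℓ₂)) ∪
      (S ℓ₂).biUnion fun i' =>
        (Finset.univ.filter fun ℓ' : Fin (2 ^ k - 1) =>
            ℓ₁ ≤ ℓ' ∧ i' ∈ S ℓ').biUnion
          fun ℓ' => US U (S ℓ') \ D (S ℓ') := by
  intro x hx
  simp only [Fset, Eset, mem_sdiff, mem_biUnion, Finset.mem_inf, mem_filter, mem_univ,
    true_and, not_exists, not_and] at hx
  obtain ⟨hxE, hxN⟩ := hx
  have hxD : x ∈ D (S ℓ₂) := hxE ℓ₂ ⟨hlt, hi₂⟩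
  by_cases hxU : x ∈ US U (S ℓ₂)
  · obtain ⟨i', hi', hxi'⟩ := mem_biUnion.mp hxU
    -- The same `i'` witnesses both `x ∈ U_{i'}` and the failure of `x ∈ E^{ℓ₁}_{i'}`.
    have hne := hxN i' hi'
    push Not at hne
    obtain ⟨ℓ', ⟨hle, hmem⟩, hxD'⟩ := hne
    refine mem_union_right _ (mem_biUnion.mpr ⟨i', hi', mem_biUnion.mpr ⟨ℓ', ?_, ?_⟩⟩)
    · exact mem_filter.mpr ⟨mem_univ _, hle, hmem⟩
    · exact mem_sdiff.mpr ⟨mem_biUnion.mpr ⟨i', hmem, hxi'⟩, hxD'⟩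
  · exact mem_union_left _ (mem_sdiff.mpr ⟨hxD, hxU⟩)
end

section
/- Let n ≥ 1, let a_1, …, a_n and λ be non-negative real numbers, and let S := Σ_{i=1}^n a_i. If S > λ·a_i for every i ∈ [n], then Σ_{i=1}^n a_i/(S − λ·a_i) ≥ n/(n − λ). (Under the hypotheses one automatically has S > 0 and n > λ, so all denominators are positive.) -/
open Finset

/-!
The function `x ↦ x / (S - λ x)` is convex where `S - λ x > 0`, so it lies above its tangent line at
the mean `m = S / n` (`tangent_line_le`). Summing over `x = a i`, the linear parts cancel because
`∑ (a i - m) = 0`, and what remains is `n * (m / (S - λ m)) = n / (n - λ)`.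
-/

/-- The gap between the two sides is `S λ (x - m)² / ((S - λ x) (S - λ m)²)`. -/
lemma tangent_line_le {S lam x m : ℝ} (hS : 0 ≤ S) (hlam : 0 ≤ lam)
    (hx : 0 < S - lam * x) (hm : 0 < S - lam * m) :
    m / (S - lam * m) + S / (S - lam * m) ^ 2 * (x - m) ≤ x / (S - lam * x) := by
  have key : x / (S - lam * x) - (m / (S - lam * m) + S / (S - lam * m) ^ 2 * (x - m))
      = S * lam * (x - m) ^ 2 / ((S - lam * x) * (S - lam * m) ^ 2) := by
    obtain ⟨p, hp⟩ : ∃ p, p = S - lam * x := ⟨_, rfl⟩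
    obtain ⟨q, hq⟩ : ∃ q, q = S - lam * m := ⟨_, rfl⟩
    rw [← hp] at hx ⊢
    rw [← hq] at hm ⊢
    field_simp
    rw [hp, hq]
    ring
  have gap_nonneg : 0 ≤ S * lam * (x - m) ^ 2 / ((S - lam * x) * (S - lam * m) ^ 2) := by
    positivity
  linarith

/-- If `a_1,…,a_n, λ ≥ 0` and `S := Σ a_i` satisfies `S > λ a_i` for all `i`, then
`Σ_i a_i / (S - λ a_i) ≥ n / (n - λ)`. -/
theorem sum_div_ineq (n : ℕ) (hn : 1 ≤ n) (a : Fin n → ℝ) (lam : ℝ)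
    (ha : ∀ i, 0 ≤ a i) (hlam : 0 ≤ lam)
    (hS : ∀ i, lam * a i < ∑ j, a j) :
    (n : ℝ) / ((n : ℝ) - lam) ≤ ∑ i, a i / ((∑ j, a j) - lam * a i) := by
  have hn0 : (0 : ℝ) < n := by exact_mod_cast hn
  obtain ⟨S, hSdef⟩ : ∃ S, S = ∑ j, a j := ⟨_, rfl⟩
  rw [← hSdef] at hS ⊢
  have hSpos : 0 < S := (mul_nonneg hlam (ha ⟨0, hn⟩)).trans_lt (hS ⟨0, hn⟩)
  -- Summing the hypotheses `λ a i < S` gives `λ S < n S`.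
  have hlt : lam < n := by
    have hsum : ∑ i, lam * a i < ∑ _i : Fin n, S :=
      Finset.sum_lt_sum_of_nonempty ⟨⟨0, hn⟩, Finset.mem_univ _⟩ fun i _ => hS i
    rw [← Finset.mul_sum, ← hSdef] at hsum
    simp only [sum_const, card_univ, Fintype.card_fin, nsmul_eq_mul] at hsum
    exact lt_of_mul_lt_mul_right hsum hSpos.le
  have hd : 0 < (n : ℝ) - lam := sub_pos.2 hlt
  have hmean : S - lam * (S / n) = S * (n - lam) / n := by field_simp
  have hm : 0 < S - lam * (S / n) := by rw [hmean]; positivity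
  calc (n : ℝ) / (n - lam)
      = ∑ i, (S / n / (S - lam * (S / n)) + S / (S - lam * (S / n)) ^ 2 * (a i - S / n)) := by
        rw [Finset.sum_add_distrib, ← Finset.mul_sum, Finset.sum_sub_distrib, ← hSdef]
        simp only [sum_const, card_univ, Fintype.card_fin, nsmul_eq_mul]
        rw [mul_div_cancel₀ S hn0.ne', sub_self, mul_zero, add_zero, hmean]
        field_simp
    _ ≤ ∑ i, a i / (S - lam * a i) :=
        Finset.sum_le_sum fun i _ => tangent_line_le hSpos.le hlam (sub_pos.2 (hS i)) hm
end

section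
/- Let W be an n×n real matrix and let m ≥ 1, and define the (mn)×(mn) matrix W' := W ⊗ J_m (Kronecker product with the m×m all-ones matrix). Then the maximum of uᵀW'v over all binary vectors u, v ∈ {0,1}^{mn} equals m² times the maximum of xᵀWy over all binary vectors x, y ∈ {0,1}^n. Furthermore, if x and y maximize xᵀWy, then u = x ⊗ 1_m and v = y ⊗ 1_m maximize uᵀW'v, where 1_m is the all-ones vector of length m. -/
/-!
Writing `u_a` for the slice `i ↦ u (i, a)`, one has `uᵀ(W ⊗ J_m)v = ∑ a b, u_aᵀ W v_b`
(`form_kronecker_eq_sum`). The slices of a binary vector are binary, so each of the `m²` terms is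
at most the maximum of `xᵀWy`, which gives the upper bound (`form_kronecker_le`). For
`u = x ⊗ 1_m` and `v = y ⊗ 1_m` every slice is `x`, respectively `y`, so the value is exactly
`m² xᵀWy` (`form_kronecker_lift`) and the bound is attained at a maximizing pair.
-/

open Matrix Finset
open Kronecker

/-- The `m × m` all-ones matrix. -/
def Jmat (m : ℕ) : Matrix (Fin m) (Fin m) ℝ :=
  Matrix.of fun _ _ => (1 : ℝ)

/-- A vector is binary if its entries lie in `{0,1}`. -/
def IsBin {ι : Type*} (u : ι → ℝ) : Prop := ∀ i, u i = 0 ∨ u i = 1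

/-- The maximum is attained because there are finitely many binary vectors. -/
lemma exists_maximizer {n : ℕ} (W : Matrix (Fin n) (Fin n) ℝ) :
    ∃ x y : Fin n → ℝ, IsBin x ∧ IsBin y ∧ ∀ x' y' : Fin n → ℝ, IsBin x' → IsBin y' →
      x' ⬝ᵥ W.mulVec y' ≤ x ⬝ᵥ W.mulVec y := by
  have hfin : {x : Fin n → ℝ | IsBin x}.Finite := by
    refine (Set.Finite.pi' (t := fun _ : Fin n => ({0, 1} : Set ℝ))
      fun _ => Set.toFinite _).subset ?_
    intro x hx i
    simpa using hx i
  have hne : {x : Fin n → ℝ | IsBin x}.Nonempty := ⟨fun _ => 0, fun _ => Or.inl rfl⟩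
  obtain ⟨p, hp, hmax⟩ := Set.exists_max_image _
    (fun p : (Fin n → ℝ) × (Fin n → ℝ) => p.1 ⬝ᵥ W.mulVec p.2)
    (hfin.prod hfin) (hne.prod hne)
  exact ⟨p.1, p.2, hp.1, hp.2, fun x' y' hx hy => hmax (x', y') ⟨hx, hy⟩⟩

/-- The bilinear form of `W ⊗ J_m` splits as the sum, over pairs of positions inside the blocks,
of the bilinear form of `W` at the corresponding slices. -/
lemma form_kronecker_eq_sum {n m : ℕ} (W : Matrix (Fin n) (Fin n) ℝ)
    (u v : Fin n × Fin m → ℝ) :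
    u ⬝ᵥ (W ⊗ₖ Jmat m).mulVec v =
      ∑ a : Fin m, ∑ b : Fin m, (fun i => u (i, a)) ⬝ᵥ W.mulVec (fun j => v (j, b)) := by
  simp only [dotProduct, mulVec, Jmat, kroneckerMap_apply, of_apply, mul_one,
    Fintype.sum_prod_type_right, Finset.mul_sum]
  refine Finset.sum_congr rfl fun a _ => ?_
  rw [Finset.sum_comm]

lemma form_kronecker_le {n m : ℕ} (W : Matrix (Fin n) (Fin n) ℝ) {M : ℝ}
    (hM : ∀ x y : Fin n → ℝ, IsBin x → IsBin y → x ⬝ᵥ W.mulVec y ≤ M)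
    (u v : Fin n × Fin m → ℝ) (hu : IsBin u) (hv : IsBin v) :
    u ⬝ᵥ (W ⊗ₖ Jmat m).mulVec v ≤ (m : ℝ) ^ 2 * M := by
  rw [form_kronecker_eq_sum]
  calc _ ≤ ∑ _a : Fin m, ∑ _b : Fin m, M :=
        Finset.sum_le_sum fun a _ => Finset.sum_le_sum fun b _ =>
          hM _ _ (fun i => hu (i, a)) (fun j => hv (j, b))
    _ = (m : ℝ) ^ 2 * M := by simp; ring

lemma form_kronecker_lift {n m : ℕ} (W : Matrix (Fin n) (Fin n) ℝ) (x y : Fin n → ℝ) :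
    (fun p : Fin n × Fin m => x p.1) ⬝ᵥ (W ⊗ₖ Jmat m).mulVec (fun p => y p.1) =
      (m : ℝ) ^ 2 * (x ⬝ᵥ W.mulVec y) := by
  rw [form_kronecker_eq_sum]
  simp
  ring

/-- For `W' = W ⊗ J_m`: the maximum of `uᵀW'v` over binary `u, v` equals
`m²` times the maximum of `xᵀWy` over binary `x, y`; moreover, if `x, y` maximize
`xᵀWy` then `u = x ⊗ 1_m`, `v = y ⊗ 1_m` maximize `uᵀW'v`. -/
theorem blockmatrix_optima (n m : ℕ) (hm : 1 ≤ m) (W : Matrix (Fin n) (Fin n) ℝ) :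
    (sSup {z : ℝ | ∃ u v : Fin n × Fin m → ℝ, IsBin u ∧ IsBin v ∧
        z = u ⬝ᵥ (W ⊗ₖ Jmat m).mulVec v} =
      (m : ℝ) ^ 2 *
        sSup {z : ℝ | ∃ x y : Fin n → ℝ, IsBin x ∧ IsBin y ∧ z = x ⬝ᵥ W.mulVec y}) ∧
    ∀ x y : Fin n → ℝ, IsBin x → IsBin y →
      (∀ x' y' : Fin n → ℝ, IsBin x' → IsBin y' →
        x' ⬝ᵥ W.mulVec y' ≤ x ⬝ᵥ W.mulVec y) →
      ∀ u' v' : Fin n × Fin m → ℝ, IsBin u' → IsBin v' →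
        u' ⬝ᵥ (W ⊗ₖ Jmat m).mulVec v' ≤
          (fun p => x p.1) ⬝ᵥ (W ⊗ₖ Jmat m).mulVec (fun p => y p.1) := by
  refine ⟨?_, ?_⟩
  · obtain ⟨x, y, hx, hy, hmax⟩ := exists_maximizer W
    have h₁ : IsGreatest {z : ℝ | ∃ x y : Fin n → ℝ, IsBin x ∧ IsBin y ∧
        z = x ⬝ᵥ W.mulVec y} (x ⬝ᵥ W.mulVec y) := by
      refine ⟨⟨x, y, hx, hy, rfl⟩, ?_⟩
      rintro _ ⟨x', y', hx', hy', rfl⟩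
      exact hmax x' y' hx' hy'
    have h₂ : IsGreatest {z : ℝ | ∃ u v : Fin n × Fin m → ℝ, IsBin u ∧ IsBin v ∧
        z = u ⬝ᵥ (W ⊗ₖ Jmat m).mulVec v} ((m : ℝ) ^ 2 * (x ⬝ᵥ W.mulVec y)) := by
      refine ⟨⟨fun p => x p.1, fun p => y p.1, fun p => hx p.1, fun p => hy p.1,
        (form_kronecker_lift W x y).symm⟩, ?_⟩
      rintro _ ⟨u, v, hu, hv, rfl⟩
      exact form_kronecker_le W hmax u v hu hv
    rw [h₁.csSup_eq, h₂.csSup_eq]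
  · intro x y _ _ hmax u v hu hv
    rw [form_kronecker_lift]
    exact form_kronecker_le W hmax u v hu hv
end

section
/- Let W = (w_{ij}) be an n×n matrix with entries in {−1,0,1} and let H be an m×m Hadamard matrix. Define the (mn)×(mn) block matrix W̃ whose (i,j) block (of size m×m) equals w_{ij}·J_m if w_{ij} ≠ 0 and equals H if w_{ij} = 0, and let W' := W ⊗ J_m. Then for all binary vectors u, v ∈ {0,1}^{mn}: |uᵀW̃v − uᵀW'v| ≤ n²·m^{3/2}. -/
/-!
The matrices `W̃` and `W ⊗ J_m` differ only in the blocks where `w_{ij} = 0`; there the difference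
is `H`. Such a block contributes `aᵀ H b` for binary vectors `a, b` of length `m`, and since
`HᵀH = m·I`, Cauchy–Schwarz gives `(aᵀ H b)² ≤ ‖a‖² ‖H b‖² = m ‖a‖² ‖b‖² ≤ m³`
(`hadamard_block_bound`). Summing the bound `m^{3/2}` over the at most `n²` blocks proves the claim.
-/

open Matrix Finset
open Kronecker

/-- The block matrix `W̃`: block `(i,j)` equals `w_{ij}·J_m` if `w_{ij} ≠ 0`,
and equals `H` if `w_{ij} = 0`. -/
noncomputable def Wtilde {n m : ℕ} (W : Matrix (Fin n) (Fin n) ℝ) (H : Matrix (Fin m) (Fin m) ℝ) :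
    Matrix (Fin n × Fin m) (Fin n × Fin m) ℝ :=
  Matrix.of fun p q => if W p.1 q.1 ≠ 0 then W p.1 q.1 else H p.2 q.2

lemma sum_sq_le_of_binary {m : ℕ} (a : Fin m → ℝ) (ha : ∀ i, a i = 0 ∨ a i = 1) :
    ∑ i, a i ^ 2 ≤ (m : ℝ) := by
  calc ∑ i, a i ^ 2 ≤ ∑ _i : Fin m, (1 : ℝ) := by
        refine Finset.sum_le_sum fun i _ => ?_
        rcases ha i with h | h <;> simp [h]
    _ = m := by simp

/-- A Hadamard matrix scales squared Euclidean norms by `m`. -/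
lemma sum_sq_mulVec {m : ℕ} (H : Matrix (Fin m) (Fin m) ℝ)
    (hHad : Hᵀ * H = (m : ℝ) • (1 : Matrix (Fin m) (Fin m) ℝ)) (b : Fin m → ℝ) :
    ∑ k, (H *ᵥ b) k ^ 2 = m * ∑ k, b k ^ 2 := by
  have h : (H *ᵥ b) ⬝ᵥ (H *ᵥ b) = m * (b ⬝ᵥ b) := by
    rw [Matrix.dotProduct_mulVec, ← Matrix.mulVec_transpose, Matrix.mulVec_mulVec, hHad,
      Matrix.smul_mulVec, Matrix.one_mulVec, smul_dotProduct, smul_eq_mul]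
  simpa only [dotProduct, ← pow_two] using h

lemma hadamard_block_bound {m : ℕ} (H : Matrix (Fin m) (Fin m) ℝ)
    (hHad : Hᵀ * H = (m : ℝ) • (1 : Matrix (Fin m) (Fin m) ℝ)) (a b : Fin m → ℝ)
    (ha : ∀ i, a i = 0 ∨ a i = 1) (hb : ∀ i, b i = 0 ∨ b i = 1) :
    |a ⬝ᵥ (H *ᵥ b)| ≤ (m : ℝ) ^ ((3 : ℝ) / 2) := by
  have hm : (0 : ℝ) ≤ m := Nat.cast_nonneg m
  refine abs_le_of_sq_le_sq ?_ (Real.rpow_nonneg hm _)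
  have hpow : ((m : ℝ) ^ ((3 : ℝ) / 2)) ^ 2 = (m : ℝ) * (m * m) := by
    rw [← Real.rpow_natCast, ← Real.rpow_mul hm]
    norm_num
    ring
  calc (a ⬝ᵥ (H *ᵥ b)) ^ 2 ≤ (∑ k, a k ^ 2) * ∑ k, (H *ᵥ b) k ^ 2 :=
        Finset.sum_mul_sq_le_sq_mul_sq _ _ _
    _ = (∑ k, a k ^ 2) * (m * ∑ k, b k ^ 2) := by rw [sum_sq_mulVec H hHad]
    _ ≤ m * (m * m) := by
        gcongr
        · exact sum_sq_le_of_binary a ha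
        · exact sum_sq_le_of_binary b hb
    _ = _ := hpow.symm

/-- The difference of the two bilinear forms, expanded over the blocks with `w_{ij} = 0`. -/
lemma form_sub_eq {n m : ℕ} (W : Matrix (Fin n) (Fin n) ℝ) (H : Matrix (Fin m) (Fin m) ℝ)
    (u v : Fin n × Fin m → ℝ) :
    u ⬝ᵥ (Wtilde W H).mulVec v - u ⬝ᵥ (W ⊗ₖ Jmat m).mulVec v =
      ∑ i, ∑ j, if W i j = 0 then (fun k => u (i, k)) ⬝ᵥ (H *ᵥ fun l => v (j, l)) else 0 := by
  rw [← dotProduct_sub, ← Matrix.sub_mulVec]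
  simp only [dotProduct, Matrix.mulVec, Fintype.sum_prod_type, Finset.mul_sum]
  refine Finset.sum_congr rfl fun i _ => ?_
  rw [Finset.sum_comm]
  refine Finset.sum_congr rfl fun j _ => ?_
  by_cases h : W i j = 0 <;> simp [h, Wtilde, Jmat]

/-- Replacing zero blocks of `W ⊗ J_m` with a Hadamard matrix changes any binary
bilinear form by at most `n²·m^(3/2)`. -/
theorem hadamard_replacement (n m : ℕ) (W : Matrix (Fin n) (Fin n) ℝ)
    (hW : ∀ i j, W i j = -1 ∨ W i j = 0 ∨ W i j = 1)
    (H : Matrix (Fin m) (Fin m) ℝ)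
    (hent : ∀ i j, H i j = 1 ∨ H i j = -1)
    (hHad : Hᵀ * H = (m : ℝ) • (1 : Matrix (Fin m) (Fin m) ℝ))
    (u v : Fin n × Fin m → ℝ)
    (hu : ∀ i, u i = 0 ∨ u i = 1) (hv : ∀ i, v i = 0 ∨ v i = 1) :
    |u ⬝ᵥ (Wtilde W H).mulVec v - u ⬝ᵥ (W ⊗ₖ Jmat m).mulVec v| ≤
      (n : ℝ) ^ 2 * (m : ℝ) ^ ((3 : ℝ) / 2) := by
  rw [form_sub_eq]
  calc _ ≤ ∑ _i : Fin n, ∑ _j : Fin n, (m : ℝ) ^ ((3 : ℝ) / 2) := by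
        refine (Finset.abs_sum_le_sum_abs _ _).trans (Finset.sum_le_sum fun i _ => ?_)
        refine (Finset.abs_sum_le_sum_abs _ _).trans (Finset.sum_le_sum fun j _ => ?_)
        split_ifs
        · exact hadamard_block_bound H hHad _ _ (fun _ => hu _) (fun _ => hv _)
        · rw [abs_zero]
          positivity
    _ = _ := by
        simp only [Finset.sum_const, Finset.card_univ, Fintype.card_fin, nsmul_eq_mul]
        ring
end

section
/- Let W be an n×n matrix with entries in {−1,0,1}, let m ≥ 4n⁴, and let H be an m×m Hadamard matrix. Define the (mn)×(mn) block matrix W̃ whose (i,j) block (of size m×m) equals w_{ij}·J_m if w_{ij} ≠ 0 and equals H if w_{ij} = 0. Then | max_{u,v ∈ {0,1}^{mn}} uᵀW̃v − m² · max_{x,y ∈ {0,1}^n} xᵀWy | ≤ m²/2. Consequently, since m² · max_{x,y} xᵀWy is an integer multiple of m², the value max_{u,v} uᵀW̃v uniquely determines max_{x,y} xᵀWy. -/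
/-!
For binary `u, v` with block sums `A, B ∈ [0,m]ⁿ`, the blocks of `W̃` with `w_{ij} ≠ 0` contribute
exactly `Aᵀ W B`, and each remaining block contributes `sᵀ H t` with `s, t` binary. By
Cauchy–Schwarz and `HᵀH = m I` the latter is at most `m^{3/2} ≤ m² / (2n²)` in absolute value
(here `m ≥ 4n⁴` enters), so the total error is at most `m²/2` (`form_approx`).

It remains to compare the main terms. A bilinear form on `[0,m]ⁿ × [0,m]ⁿ` is dominated by `m²`
times its value at a pair of binary vectors (`exists_vertex_pair`), which gives the upper bound;
repeating each coordinate of a maximizing pair `x, y` for `W` gives `A = m x`, `B = m y` and the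
lower bound.
-/

open Matrix Finset
open Kronecker

lemma finite_isBin {ι : Type*} [Finite ι] : {u : ι → ℝ | IsBin u}.Finite := by
  have h : (Set.univ.pi fun _ : ι => ({0, 1} : Set ℝ)).Finite :=
    Set.Finite.pi fun _ => Set.toFinite _
  exact h.subset fun u hu i _ => by simpa using hu i

/-- The set of values of a binary bilinear form is finite, so its `sSup` is an attained maximum. -/
lemma finite_form {ι : Type*} [Fintype ι] (M : Matrix ι ι ℝ) :
    {z : ℝ | ∃ u v : ι → ℝ, IsBin u ∧ IsBin v ∧ z = u ⬝ᵥ M.mulVec v}.Finite := by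
  refine (((finite_isBin (ι := ι)).prod (finite_isBin (ι := ι))).image
    fun p => p.1 ⬝ᵥ M.mulVec p.2).subset ?_
  rintro z ⟨u, v, hu, hv, rfl⟩
  exact ⟨(u, v), ⟨hu, hv⟩, rfl⟩

lemma nonempty_form {ι : Type*} [Fintype ι] (M : Matrix ι ι ℝ) :
    {z : ℝ | ∃ u v : ι → ℝ, IsBin u ∧ IsBin v ∧ z = u ⬝ᵥ M.mulVec v}.Nonempty :=
  ⟨_, 0, 0, fun _ => Or.inl rfl, fun _ => Or.inl rfl, rfl⟩

/-- A linear form on the cube `[0,m]ⁿ` is dominated by its value at a vertex. -/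
lemma exists_vertex {ι : Type*} [Fintype ι] (m : ℝ) (a c : ι → ℝ)
    (h0 : ∀ i, 0 ≤ a i) (h1 : ∀ i, a i ≤ m) :
    ∃ x : ι → ℝ, IsBin x ∧ a ⬝ᵥ c ≤ m * (x ⬝ᵥ c) := by
  refine ⟨fun i => if 0 ≤ c i then 1 else 0, fun i => by dsimp only; split_ifs <;> simp, ?_⟩
  simp only [dotProduct, Finset.mul_sum]
  refine Finset.sum_le_sum fun i _ => ?_
  split_ifs with h
  · rw [one_mul]
    exact mul_le_mul_of_nonneg_right (h1 i) h
  · rw [zero_mul, mul_zero]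
    exact mul_nonpos_of_nonneg_of_nonpos (h0 i) (not_le.mp h).le

lemma exists_vertex_pair {ι : Type*} [Fintype ι] (m : ℝ) (hm : 0 ≤ m) (W : Matrix ι ι ℝ)
    (a b : ι → ℝ) (ha0 : ∀ i, 0 ≤ a i) (ha1 : ∀ i, a i ≤ m)
    (hb0 : ∀ i, 0 ≤ b i) (hb1 : ∀ i, b i ≤ m) :
    ∃ x y : ι → ℝ, IsBin x ∧ IsBin y ∧ a ⬝ᵥ W.mulVec b ≤ m ^ 2 * (x ⬝ᵥ W.mulVec y) := by
  obtain ⟨x, hx, hxle⟩ := exists_vertex m a (W.mulVec b) ha0 ha1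
  obtain ⟨y, hy, hyle⟩ := exists_vertex m b (x ᵥ* W) hb0 hb1
  refine ⟨x, y, hx, hy, hxle.trans ?_⟩
  rw [Matrix.dotProduct_mulVec, dotProduct_comm, Matrix.dotProduct_mulVec, dotProduct_comm _ y,
    pow_two, mul_assoc]
  exact mul_le_mul_of_nonneg_left hyle hm

lemma IsBin.sum_bounds {m : ℕ} {s : Fin m → ℝ} (hs : IsBin s) :
    0 ≤ ∑ k, s k ∧ ∑ k, s k ≤ m := by
  constructor
  · exact Finset.sum_nonneg fun k _ => by rcases hs k with h | h <;> simp [h]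
  · calc ∑ k, s k ≤ ∑ _k : Fin m, (1 : ℝ) :=
        Finset.sum_le_sum fun k _ => by rcases hs k with h | h <;> simp [h]
      _ = m := by simp

lemma IsBin.dotProduct_self_le {m : ℕ} {s : Fin m → ℝ} (hs : IsBin s) : s ⬝ᵥ s ≤ m := by
  calc s ⬝ᵥ s = ∑ k, s k := Finset.sum_congr rfl fun k _ => by rcases hs k with h | h <;> simp [h]
    _ ≤ m := hs.sum_bounds.2

/-- Cauchy–Schwarz and `‖Ht‖² = m‖t‖²`: a Hadamard matrix has discrepancy at most `m^{3/2}`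
on binary vectors. -/
lemma hadamard_sq_le {m : ℕ} (H : Matrix (Fin m) (Fin m) ℝ)
    (hHad : Hᵀ * H = (m : ℝ) • (1 : Matrix (Fin m) (Fin m) ℝ))
    {s t : Fin m → ℝ} (hs : IsBin s) (ht : IsBin t) :
    (s ⬝ᵥ H.mulVec t) ^ 2 ≤ (m : ℝ) ^ 3 := by
  have hcs : (s ⬝ᵥ H.mulVec t) ^ 2 ≤ (s ⬝ᵥ s) * (H.mulVec t ⬝ᵥ H.mulVec t) := by
    simpa only [dotProduct, pow_two] using
      Finset.sum_mul_sq_le_sq_mul_sq Finset.univ s (H.mulVec t)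
  have hnorm : H.mulVec t ⬝ᵥ H.mulVec t = m * (t ⬝ᵥ t) := by
    rw [Matrix.dotProduct_mulVec, Matrix.vecMul_mulVec, hHad, Matrix.vecMul_smul, Matrix.vecMul_one,
      smul_dotProduct, smul_eq_mul]
  have hm : (0 : ℝ) ≤ m := Nat.cast_nonneg m
  have ht0 : 0 ≤ t ⬝ᵥ t := Finset.sum_nonneg fun k _ => mul_self_nonneg (t k)
  calc (s ⬝ᵥ H.mulVec t) ^ 2 ≤ (s ⬝ᵥ s) * (m * (t ⬝ᵥ t)) := hnorm ▸ hcs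
    _ ≤ m * (m * m) := mul_le_mul hs.dotProduct_self_le
        (mul_le_mul_of_nonneg_left ht.dotProduct_self_le hm) (mul_nonneg hm ht0) hm
    _ = (m : ℝ) ^ 3 := by ring

/-- The form of `W̃` is the form of `W` at the block sums, up to `n²` Hadamard terms, each at most
`m^{3/2} ≤ m² / (2n²)`. -/
lemma form_approx {n m : ℕ} (hm : 4 * n ^ 4 ≤ m) (W : Matrix (Fin n) (Fin n) ℝ)
    (H : Matrix (Fin m) (Fin m) ℝ)
    (hHad : Hᵀ * H = (m : ℝ) • (1 : Matrix (Fin m) (Fin m) ℝ))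
    {u v : Fin n × Fin m → ℝ} (hu : IsBin u) (hv : IsBin v) :
    |u ⬝ᵥ (Wtilde W H).mulVec v -
      (fun i => ∑ k, u (i, k)) ⬝ᵥ W.mulVec (fun j => ∑ l, v (j, l))| ≤ (m : ℝ) ^ 2 / 2 := by
  have hdecomp : u ⬝ᵥ (Wtilde W H).mulVec v -
      (fun i => ∑ k, u (i, k)) ⬝ᵥ W.mulVec (fun j => ∑ l, v (j, l)) =
      ∑ i, ∑ j, if W i j = 0 then
        (fun k => u (i, k)) ⬝ᵥ H.mulVec (fun l => v (j, l)) else 0 := by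
    have h1 : u ⬝ᵥ (Wtilde W H).mulVec v =
        ∑ i, ∑ j, ∑ k, ∑ l, u (i, k) * (Wtilde W H (i, k) (j, l) * v (j, l)) := by
      simp only [dotProduct, mulVec, Fintype.sum_prod_type, Finset.mul_sum]
      exact Finset.sum_congr rfl fun i _ => Finset.sum_comm
    have h2 : (fun i => ∑ k, u (i, k)) ⬝ᵥ W.mulVec (fun j => ∑ l, v (j, l)) =
        ∑ i, ∑ j, ∑ k, ∑ l, u (i, k) * (W i j * v (j, l)) := by
      simp only [dotProduct, mulVec, Finset.mul_sum, Finset.sum_mul]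
      exact Finset.sum_congr rfl fun i _ => Finset.sum_congr rfl fun j _ => Finset.sum_comm
    rw [h1, h2]
    simp only [← Finset.sum_sub_distrib]
    refine Finset.sum_congr rfl fun i _ => Finset.sum_congr rfl fun j _ => ?_
    split_ifs with h <;> simp [Wtilde, h, dotProduct, mulVec, Finset.mul_sum]
  rw [hdecomp]
  rcases Nat.eq_zero_or_pos n with rfl | hn
  · simp
    positivity
  have hnpos : (0 : ℝ) < n := Nat.cast_pos.mpr hn
  have hmR : 4 * (n : ℝ) ^ 4 ≤ m := by exact_mod_cast hm
  have hterm : ∀ i j, |if W i j = 0 then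
      (fun k => u (i, k)) ⬝ᵥ H.mulVec (fun l => v (j, l)) else 0| ≤
      (m : ℝ) ^ 2 / (2 * (n : ℝ) ^ 2) := by
    intro i j
    split_ifs
    · have hsq := hadamard_sq_le H hHad (s := fun k => u (i, k)) (t := fun l => v (j, l))
        (fun k => hu _) (fun l => hv _)
      refine abs_le_of_sq_le_sq (hsq.trans ?_) (by positivity)
      rw [div_pow, le_div_iff₀ (by positivity)]
      calc (m : ℝ) ^ 3 * (2 * (n : ℝ) ^ 2) ^ 2 = (m : ℝ) ^ 3 * (4 * (n : ℝ) ^ 4) := by ring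
        _ ≤ (m : ℝ) ^ 3 * m := by gcongr
        _ = ((m : ℝ) ^ 2) ^ 2 := by ring
    · rw [abs_zero]
      positivity
  calc _ ≤ ∑ i : Fin n, ∑ j : Fin n, (m : ℝ) ^ 2 / (2 * (n : ℝ) ^ 2) :=
        (Finset.abs_sum_le_sum_abs _ _).trans <| Finset.sum_le_sum fun i _ =>
          (Finset.abs_sum_le_sum_abs _ _).trans <| Finset.sum_le_sum fun j _ => hterm i j
    _ = (m : ℝ) ^ 2 / 2 := by
        simp only [Finset.sum_const, Finset.card_univ, Fintype.card_fin, nsmul_eq_mul]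
        field_simp

/-- For a `{-1,0,1}` matrix `W`, `m ≥ 4n⁴` and an `m × m` Hadamard matrix `H`, the
maximum of the binary bilinear form of `W̃` differs from `m²` times the maximum of
the binary bilinear form of `W` by at most `m²/2`. -/
theorem reduction_bound (n m : ℕ) (hm : 4 * n ^ 4 ≤ m)
    (W : Matrix (Fin n) (Fin n) ℝ)
    (hW : ∀ i j, W i j = -1 ∨ W i j = 0 ∨ W i j = 1)
    (H : Matrix (Fin m) (Fin m) ℝ)
    (hent : ∀ i j, H i j = 1 ∨ H i j = -1)
    (hHad : Hᵀ * H = (m : ℝ) • (1 : Matrix (Fin m) (Fin m) ℝ)) :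
    |sSup {z : ℝ | ∃ u v : Fin n × Fin m → ℝ, IsBin u ∧ IsBin v ∧
        z = u ⬝ᵥ (Wtilde W H).mulVec v} -
      (m : ℝ) ^ 2 *
        sSup {z : ℝ | ∃ x y : Fin n → ℝ, IsBin x ∧ IsBin y ∧ z = x ⬝ᵥ W.mulVec y}| ≤
      (m : ℝ) ^ 2 / 2 := by
  have hm0 : (0 : ℝ) ≤ m := Nat.cast_nonneg m
  rw [abs_le]
  constructor
  · -- Repeating each coordinate of `x` and `y` `m` times multiplies the form of `W` by `m²`.
    suffices h : (m : ℝ) ^ 2 *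
        sSup {z : ℝ | ∃ x y : Fin n → ℝ, IsBin x ∧ IsBin y ∧ z = x ⬝ᵥ W.mulVec y} ≤
        sSup {z : ℝ | ∃ u v : Fin n × Fin m → ℝ, IsBin u ∧ IsBin v ∧
          z = u ⬝ᵥ (Wtilde W H).mulVec v} + (m : ℝ) ^ 2 / 2 by linarith
    obtain ⟨x, y, hx, hy, hmax⟩ := (nonempty_form W).csSup_mem (finite_form W)
    rw [hmax]
    have happ := form_approx hm W H hHad (u := fun p => x p.1) (v := fun p => y p.1)
      (fun p => hx p.1) (fun p => hy p.1)
    have hsum : (fun i => ∑ _k : Fin m, x i) ⬝ᵥ W.mulVec (fun j => ∑ _l : Fin m, y j) =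
        (m : ℝ) ^ 2 * (x ⬝ᵥ W.mulVec y) := by
      have hrep (z : Fin n → ℝ) : (fun i => ∑ _k : Fin m, z i) = (m : ℝ) • z := by
        ext i
        simp
      rw [hrep, hrep, Matrix.mulVec_smul, smul_dotProduct, dotProduct_smul]
      simp only [smul_eq_mul]
      ring
    dsimp only at happ
    rw [hsum] at happ
    have hle := le_csSup (finite_form (Wtilde W H)).bddAbove
      ⟨fun p => x p.1, fun p => y p.1, fun p => hx p.1, fun p => hy p.1, rfl⟩
    linarith [(abs_le.mp happ).1]
  · -- The block sums lie in `[0,m]ⁿ`, where the form of `W` is dominated by a vertex.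
    rw [sub_le_iff_le_add]
    refine csSup_le (nonempty_form _) ?_
    rintro z ⟨u, v, hu, hv, rfl⟩
    have happ := form_approx hm W H hHad hu hv
    have hub (i : Fin n) := IsBin.sum_bounds (s := fun k => u (i, k)) fun k => hu _
    have hvb (i : Fin n) := IsBin.sum_bounds (s := fun k => v (i, k)) fun k => hv _
    obtain ⟨x, y, hx, hy, hxy⟩ := exists_vertex_pair (m : ℝ) hm0 W _ _
      (fun i => (hub i).1) (fun i => (hub i).2) (fun i => (hvb i).1) (fun i => (hvb i).2)
    have hle := mul_le_mul_of_nonneg_left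
      (le_csSup (finite_form W).bddAbove ⟨x, y, hx, hy, rfl⟩) (sq_nonneg (m : ℝ))
    linarith [(abs_le.mp happ).2]
end
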